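/- arXiv:2001.01933 — 2 statements merged into one kernel-verified Lean document; each statement's English description precedes it below -/
import Mathlib

section
/- Let n range over even natural numbers and let Δ be drawn from U(n). Then with high probability Δ has a complete (n/2 − 2)-skeleton; that is, the probability that every nonempty subset of [n] of size at most n/2 − 2 is a face of Δ tends to 1 as n → ∞ through even values. -/
open scoped Classical

noncomputable section

/-- `Δ` is a simplicial complex on vertex set `Fin n`: all faces are nonempty
and it is downward closed. -/
def IsComplex {n : ℕ} (Δ : Finset (Finset (Fin n))) : Prop :=
  (∀ x ∈ Δ, x.Nonempty) ∧
    ∀ x ∈ Δ, ∀ y : Finset (Fin n), y.Nonempty → y ⊆ x → y ∈ Δ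

/-- The finite set of all simplicial complexes on `n` vertices. -/
def allComplexes (n : ℕ) : Finset (Finset (Finset (Fin n))) :=
  Finset.univ.filter IsComplex

/-- The probability, under the uniform measure `U(n)` on all simplicial
complexes on `n` vertices, of the event `P`. -/
def uniformProb (n : ℕ) (P : Finset (Finset (Fin n)) → Prop) : ℝ :=
  (((allComplexes n).filter P).card : ℝ) / ((allComplexes n).card : ℝ)

/-!
Write `n = 2m`. By Daykin's inequality, the events that various sets are missing from a random
complex are positively correlated, and this persists after conditioning on all faces having at most
`m` elements, which itself only makes missing faces likelier. So let `p` be the conditional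
probability that a given `(m - 2)`-set is missing; by symmetry it is the same for all of them, and
for every family `S` of `(m - 2)`-sets the conditional probability that all of `S` is missing is at
least `p ^ |S|`.

The families of `(k + 1)`-sets by which a fixed complex with smaller faces can be extended form a
power set, and Finner's inequality on this power set bounds the number of complexes layer by layer.
Up to size `m - 1` the bounds telescope to `2 ^ choose n (m - 1) * exp (catalan m / 6)`. If `S` is
such that every `(m - 1)`-set lies in at most `m - 2` of the `m`-sets containing no member of `S`,
then the complexes missing `S` gain only a factor `exp (0.275 * catalan m)` from the `m`-sets,
whereas all complexes together number at least `2 ^ choose n m`, where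
`choose n m - choose n (m - 1) = catalan m`. Since `1 / 6 + 0.275 < log 2 - 1 / 4`, this gives
`p ^ |S| ≤ exp (-catalan m / 4)`. A greedy choice of `S` has `|S| ≤ catalan m / (8 m)`, so
`p ≤ exp (-2 m)`, which beats the number of `(m - 2)`-sets.
-/

open Finset

theorem prod_rpow_le_sum_add {ι : Type*} (s : Finset ι) {w x : ι → ℝ} (hw : ∀ i ∈ s, 0 ≤ w i)
    (hsum : ∑ i ∈ s, w i ≤ 1) (hx : ∀ i ∈ s, 0 ≤ x i) :
    ∏ i ∈ s, x i ^ w i ≤ ∑ i ∈ s, w i * x i + (1 - ∑ i ∈ s, w i) := by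
  have amgm := Real.geom_mean_le_arith_mean_weighted (insertNone s)
    (fun o => o.elim (1 - ∑ i ∈ s, w i) w) (fun o => o.elim 1 x)
    (forall_mem_insertNone.2 ⟨sub_nonneg.2 hsum, hw⟩) (by simp [sum_insertNone])
    (forall_mem_insertNone.2 ⟨zero_le_one, hx⟩)
  simpa [sum_insertNone, prod_insertNone, add_comm] using amgm

-- Mahler's inequality in the form needed for one coordinate of a cube: divide by the right-hand
-- product and apply the arithmetic-geometric mean inequality to each summand on the left.
theorem one_add_prod_rpow_le {ι : Type*} (s : Finset ι) {w t : ι → ℝ} (hw : ∀ i ∈ s, 0 ≤ w i)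
    (hsum : ∑ i ∈ s, w i ≤ 1) (ht : ∀ i ∈ s, 0 ≤ t i) :
    1 + ∏ i ∈ s, t i ^ w i ≤ 2 * ∏ i ∈ s, ((1 + t i) / 2) ^ w i := by
  set P := ∏ i ∈ s, ((1 + t i) / 2) ^ w i
  have hP : 0 < P := prod_pos fun i hi => Real.rpow_pos_of_pos (by linarith [ht i hi]) _
  have normalized (a : ι → ℝ) (ha : ∀ i ∈ s, 0 ≤ a i) : (∏ i ∈ s, a i ^ w i) / P ≤
      ∑ i ∈ s, w i * (a i / ((1 + t i) / 2)) + (1 - ∑ i ∈ s, w i) := by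
    rw [← prod_div_distrib, prod_congr rfl fun i hi =>
      (Real.div_rpow (ha i hi) (by linarith [ht i hi]) (w i)).symm]
    exact prod_rpow_le_sum_add s hw hsum fun i hi => div_nonneg (ha i hi) (by linarith [ht i hi])
  have total : ∑ i ∈ s, w i * (1 / ((1 + t i) / 2)) + ∑ i ∈ s, w i * (t i / ((1 + t i) / 2)) =
      2 * ∑ i ∈ s, w i := by
    rw [← sum_add_distrib, mul_sum]
    refine sum_congr rfl fun i hi => ?_
    have : 1 + t i ≠ 0 := by linarith [ht i hi]
    field_simp
  have hone := normalized (fun _ => 1) fun _ _ => zero_le_one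
  have ht' := normalized t ht
  rw [← div_le_iff₀ hP, add_div]
  simp only [Real.one_rpow, prod_const_one] at hone
  linarith

section Containment

variable {α ι : Type*} [DecidableEq α] {Z : Finset ι} {A : ι → Finset α} {c w : ι → ℝ}

theorem prod_one_add_rpow_add_prod_insert_le (hc : ∀ z ∈ Z, 0 ≤ c z) (hw : ∀ z ∈ Z, 0 ≤ w z)
    {u : α} (hdeg : ∑ z ∈ Z with u ∈ A z, w z ≤ 1) {X : Finset α} (hu : u ∉ X) :
    ∏ z ∈ Z, (1 + if A z ⊆ X then c z else 0) ^ w z +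
        ∏ z ∈ Z, (1 + if A z ⊆ insert u X then c z else 0) ^ w z ≤
      2 * ∏ z ∈ Z,
        (1 + if (A z).erase u ⊆ X then if u ∈ A z then c z / 2 else c z else 0) ^ w z := by
  set t : ι → ℝ := fun z => 1 + if (A z).erase u ⊆ X then c z else 0
  have ht : ∀ z ∈ Z, 0 ≤ t z := fun z hz => by
    have := hc z hz
    simp only [t]
    split_ifs <;> positivity
  have factor_of_mem : ∀ z ∈ Z.filter (u ∈ A ·),
      (1 + if A z ⊆ X then c z else 0) ^ w z = 1 ∧
      (1 + if A z ⊆ insert u X then c z else 0) ^ w z = t z ^ w z ∧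
      (1 + if (A z).erase u ⊆ X then if u ∈ A z then c z / 2 else c z else 0) ^ w z =
        ((1 + t z) / 2) ^ w z := fun z hz => by
    have huz := (mem_filter.1 hz).2
    refine ⟨by simp [show ¬ A z ⊆ X from fun h => hu (h huz)], by simp only [t, subset_insert_iff],
      ?_⟩
    simp only [t, huz, if_true]
    congr 1
    split_ifs <;> ring
  have factor_of_notMem : ∀ z ∈ Z.filter (u ∉ A ·),
      (1 + if A z ⊆ X then c z else 0) ^ w z = t z ^ w z ∧
      (1 + if A z ⊆ insert u X then c z else 0) ^ w z = t z ^ w z ∧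
      (1 + if (A z).erase u ⊆ X then if u ∈ A z then c z / 2 else c z else 0) ^ w z =
        t z ^ w z := fun z hz => by
    simp [t, subset_insert_iff, (mem_filter.1 hz).2]
  have mahler := one_add_prod_rpow_le (Z.filter (u ∈ A ·)) (w := w) (t := t)
    (fun z hz => hw z (mem_filter.1 hz).1) hdeg fun z hz => ht z (mem_filter.1 hz).1
  have rest_nonneg : 0 ≤ ∏ z ∈ Z with u ∉ A z, t z ^ w z :=
    prod_nonneg fun z hz => Real.rpow_nonneg (ht z (mem_filter.1 hz).1) _
  simp only [← prod_filter_mul_prod_filter_not Z (u ∈ A ·)]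
  rw [prod_congr rfl fun z hz => (factor_of_mem z hz).1,
    prod_congr rfl fun z hz => (factor_of_mem z hz).2.1,
    prod_congr rfl fun z hz => (factor_of_mem z hz).2.2,
    prod_congr rfl fun z hz => (factor_of_notMem z hz).1,
    prod_congr rfl fun z hz => (factor_of_notMem z hz).2.1,
    prod_congr rfl fun z hz => (factor_of_notMem z hz).2.2, prod_const_one]
  linarith [mul_le_mul_of_nonneg_right mahler rest_nonneg]

-- Finner's inequality on the cube `U.powerset`, by averaging out one coordinate at a time.
theorem sum_powerset_prod_one_add_rpow_le (U : Finset α) (hc : ∀ z ∈ Z, 0 ≤ c z)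
    (hw : ∀ z ∈ Z, 0 ≤ w z) (hdeg : ∀ u ∈ U, ∑ z ∈ Z with u ∈ A z, w z ≤ 1) :
    ∑ X ∈ U.powerset, ∏ z ∈ Z, (1 + if A z ⊆ X then c z else 0) ^ w z ≤
      2 ^ #U * ∏ z ∈ Z, (1 + c z / 2 ^ #(A z)) ^ w z := by
  induction U using Finset.induction_on generalizing A c with
  | empty =>
    simp only [powerset_empty, sum_singleton, card_empty, pow_zero, one_mul]
    have hfactor : ∀ z ∈ Z, (0 : ℝ) ≤ (1 + if A z ⊆ ∅ then c z else 0) ∧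
        (1 + if A z ⊆ ∅ then c z else 0) ≤ 1 + c z / 2 ^ #(A z) := fun z hz => by
      have := hc z hz
      split_ifs with h
      · simp only [subset_empty.1 h, card_empty, pow_zero, div_one, le_refl, and_true]
        positivity
      · exact ⟨by norm_num, by gcongr; positivity⟩
    exact prod_le_prod (fun z hz => Real.rpow_nonneg (hfactor z hz).1 _) fun z hz =>
      Real.rpow_le_rpow (hfactor z hz).1 (hfactor z hz).2 (hw z hz)
  | insert u U hu ih =>
    have averaged := ih (A := fun z => (A z).erase u)
      (c := fun z => if u ∈ A z then c z / 2 else c z)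
      (fun z hz => by have := hc z hz; split_ifs <;> positivity)
      fun v hv => by
        refine (sum_le_sum_of_subset_of_nonneg ?_ fun z hz _ => hw z (mem_filter.1 hz).1).trans
          (hdeg v (mem_insert_of_mem hv))
        exact monotone_filter_right _ fun z _ hz => mem_of_mem_erase hz
    have factor_eq : ∀ z ∈ Z,
        (1 + (if u ∈ A z then c z / 2 else c z) / 2 ^ #((A z).erase u)) ^ w z =
          (1 + c z / 2 ^ #(A z)) ^ w z := fun z _ => by
      split_ifs with h
      · rw [← card_erase_add_one h, pow_succ', div_div]
      · rw [erase_eq_of_notMem h]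
    rw [prod_congr rfl factor_eq] at averaged
    rw [sum_powerset_insert hu, ← sum_add_distrib, card_insert_of_notMem hu, pow_succ', mul_assoc]
    refine (sum_le_sum fun X hX => prod_one_add_rpow_add_prod_insert_le hc hw
      (hdeg u (mem_insert_self u U)) fun h => hu (mem_powerset.1 hX h)).trans ?_
    rw [← mul_sum]
    gcongr

theorem sum_powerset_two_pow_card_filter_subset_le (U : Finset α) {D a : ℕ} (hD : 0 < D)
    (hA : ∀ z ∈ Z, #(A z) = a) (hdeg : ∀ u ∈ U, #{z ∈ Z | u ∈ A z} ≤ D) :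
    ∑ X ∈ U.powerset, (2 : ℝ) ^ #{z ∈ Z | A z ⊆ X} ≤
      2 ^ #U * (1 + 2 ^ D / 2 ^ a) ^ (#Z / D : ℝ) := by
  have hD' : (0 : ℝ) < D := by exact_mod_cast hD
  have one_le : (1 : ℝ) ≤ 2 ^ D := one_le_pow₀ one_le_two
  have finner := sum_powerset_prod_one_add_rpow_le (Z := Z) (A := A) U
    (c := fun _ => 2 ^ D - 1) (w := fun _ => (D : ℝ)⁻¹) (fun _ _ => sub_nonneg.2 one_le)
    (fun _ _ => by positivity) fun u hu => by
      rw [sum_const, nsmul_eq_mul, ← div_eq_mul_inv, div_le_one hD']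
      exact_mod_cast hdeg u hu
  have factor_eq (X : Finset α) (z : ι) :
      (1 + if A z ⊆ X then (2 : ℝ) ^ D - 1 else 0) ^ (D : ℝ)⁻¹ = if A z ⊆ X then 2 else 1 := by
    split_ifs
    · rw [add_sub_cancel, Real.pow_rpow_inv_natCast zero_le_two hD.ne']
    · rw [add_zero, Real.one_rpow]
  simp only [factor_eq, prod_ite, prod_const, one_pow, mul_one] at finner
  refine finner.trans ?_
  rw [prod_congr rfl fun z hz => by rw [hA z hz], prod_const, ← Real.rpow_mul_natCast
    (add_nonneg zero_le_one (div_nonneg (sub_nonneg.2 one_le) (by positivity))), inv_mul_eq_div]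
  have : (0 : ℝ) ≤ (2 ^ D - 1) / 2 ^ a := div_nonneg (sub_nonneg.2 one_le) (by positivity)
  gcongr
  linarith

end Containment

section HittingSet

variable {α β : Type*} {X : Finset α} {Q : Finset β} {r : α → β → Prop}
  [∀ x, DecidablePred (r x)] {δ : ℝ}

theorem exists_mul_card_le_card_filter (hX : X.Nonempty)
    (hδ : ∀ q ∈ Q, δ * #X ≤ #{x ∈ X | r x q}) : ∃ x ∈ X, δ * #Q ≤ #{q ∈ Q | r x q} := by
  refine exists_le_of_sum_le hX ?_
  calc ∑ _x ∈ X, δ * #Q = ∑ _q ∈ Q, δ * #X := by simp only [sum_const, nsmul_eq_mul]; ring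
    _ ≤ ∑ q ∈ Q, (#{x ∈ X | r x q} : ℝ) := sum_le_sum hδ
    _ = ∑ x ∈ X, (#{q ∈ Q | r x q} : ℝ) := by
      exact_mod_cast (sum_card_bipartiteAbove_eq_sum_card_bipartiteBelow r).symm

theorem exists_subset_card_unhit_le (hX : X.Nonempty)
    (hδ : ∀ q ∈ Q, δ * #X ≤ #{x ∈ X | r x q}) (k : ℕ) :
    ∃ S ⊆ X, #S ≤ k ∧ #{q ∈ Q | ∀ x ∈ S, ¬ r x q} ≤ Real.exp (-(δ * k)) * #Q := by
  induction k with
  | zero => exact ⟨∅, empty_subset X, by simp, by simp⟩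
  | succ k ih =>
    obtain ⟨S, hSX, hSk, hS⟩ := ih
    set W := {q ∈ Q | ∀ x ∈ S, ¬ r x q}
    obtain ⟨x, hx, hxW⟩ := exists_mul_card_le_card_filter (Q := W) hX
      fun q hq => hδ q (mem_filter.1 hq).1
    refine ⟨insert x S, insert_subset hx hSX, (card_insert_le x S).trans (by lia), ?_⟩
    have unhit_eq : {q ∈ Q | ∀ y ∈ insert x S, ¬ r y q} = {q ∈ W | ¬ r x q} := by
      ext q
      simp only [W, forall_mem_insert, mem_filter]
      tauto
    have split : (#{q ∈ W | r x q} : ℝ) + #{q ∈ W | ¬ r x q} = #W := by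
      exact_mod_cast card_filter_add_card_filter_not (s := W) (r x)
    calc (#{q ∈ Q | ∀ y ∈ insert x S, ¬ r y q} : ℝ) ≤ (-δ + 1) * #W := by
          rw [unhit_eq]; linarith
      _ ≤ Real.exp (-δ) * (Real.exp (-(δ * k)) * #Q) := by
          gcongr
          exact Real.add_one_le_exp (-δ)
      _ = Real.exp (-(δ * (k + 1 : ℕ))) * #Q := by
          rw [← mul_assoc, ← Real.exp_add]
          push_cast
          ring_nf

theorem exists_hitting_set (hX : X.Nonempty) (hδ₀ : 0 < δ)
    (hδ : ∀ q ∈ Q, δ * #X ≤ #{x ∈ X | r x q}) (k : ℕ) :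
    ∃ S ⊆ X, #S ≤ k + Real.exp (-(δ * k)) * #Q ∧ ∀ q ∈ Q, ∃ x ∈ S, r x q := by
  obtain ⟨S, hSX, hSk, hS⟩ := exists_subset_card_unhit_le hX hδ k
  set W := {q ∈ Q | ∀ x ∈ S, ¬ r x q}
  have exists_hit : ∀ q ∈ Q, ∃ x ∈ X, r x q := fun q hq => by
    have : 0 < (#{x ∈ X | r x q} : ℝ) :=
      (mul_pos hδ₀ (Nat.cast_pos.2 hX.card_pos)).trans_le (hδ q hq)
    exact filter_nonempty_iff.1 (card_pos.1 (Nat.cast_pos.1 this))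
  have : Nonempty α := ⟨hX.choose⟩
  choose! hit hitX hit_spec using exists_hit
  refine ⟨S ∪ W.image hit, union_subset hSX ?_, ?_, fun q hq => ?_⟩
  · exact image_subset_iff.2 fun q hq => hitX q (mem_filter.1 hq).1
  · have : #(S ∪ W.image hit) ≤ k + #W :=
      (card_union_le _ _).trans (add_le_add hSk card_image_le)
    have : (#(S ∪ W.image hit) : ℝ) ≤ k + #W := by exact_mod_cast this
    linarith
  · by_cases hqW : q ∈ W
    · exact ⟨hit q, mem_union_right _ (mem_image_of_mem hit hqW), hit_spec q hq⟩
    · obtain ⟨x, hx, hxq⟩ : ∃ x ∈ S, r x q := by simpa [W, hq] using hqW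
      exact ⟨x, mem_union_left _ hx, hxq⟩

end HittingSet

section Avoiding

variable {n : ℕ} {F G T T' : Finset (Finset (Fin n))} {Δ Δ' : Finset (Finset (Fin n))}

/-- The `k`-element subsets of the vertex set. -/
def layer (n k : ℕ) : Finset (Finset (Fin n)) :=
  powersetCard k univ

theorem mem_layer {k : ℕ} {x : Finset (Fin n)} : x ∈ layer n k ↔ #x = k :=
  mem_powersetCard_univ

theorem card_layer (n k : ℕ) : #(layer n k) = n.choose k := by
  rw [layer, card_powersetCard, card_fin]

/-- The simplicial complexes having no face in `F`. -/
def avoiding (F : Finset (Finset (Fin n))) : Finset (Finset (Finset (Fin n))) :=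
  {Δ ∈ allComplexes n | Disjoint Δ F}

theorem mem_avoiding : Δ ∈ avoiding F ↔ IsComplex Δ ∧ Disjoint Δ F := by
  simp [avoiding, allComplexes]

theorem avoiding_empty : avoiding (∅ : Finset (Finset (Fin n))) = allComplexes n := by
  simp [avoiding]

theorem avoiding_subset_avoiding (h : F ⊆ G) : avoiding G ⊆ avoiding F := fun _ hΔ =>
  mem_avoiding.2 ⟨(mem_avoiding.1 hΔ).1, (mem_avoiding.1 hΔ).2.mono_right h⟩

theorem card_avoiding_pos : (0 : ℝ) < #(avoiding F) :=
  Nat.cast_pos.2 <| card_pos.2 ⟨∅, mem_avoiding.2 ⟨by simp [IsComplex], disjoint_empty_left F⟩⟩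

theorem isComplex_inter (hΔ : IsComplex Δ) (hΔ' : IsComplex Δ') : IsComplex (Δ ∩ Δ') :=
  ⟨fun x hx => hΔ.1 x (mem_inter.1 hx).1, fun x hx y hy hyx => mem_inter.2
    ⟨hΔ.2 x (mem_inter.1 hx).1 y hy hyx, hΔ'.2 x (mem_inter.1 hx).2 y hy hyx⟩⟩

theorem isComplex_union (hΔ : IsComplex Δ) (hΔ' : IsComplex Δ') : IsComplex (Δ ∪ Δ') :=
  ⟨fun x hx => (mem_union.1 hx).elim (hΔ.1 x) (hΔ'.1 x), fun x hx y hy hyx => mem_union.2 <|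
    (mem_union.1 hx).imp (hΔ.2 x · y hy hyx) (hΔ'.2 x · y hy hyx)⟩

theorem card_avoiding_mul_card_avoiding_le (F G : Finset (Finset (Fin n))) :
    #(avoiding F) * #(avoiding G) ≤ #(avoiding (F ∪ G)) * #(avoiding (F ∩ G)) := by
  refine (le_card_infs_mul_card_sups _ _).trans (Nat.mul_le_mul (card_le_card ?_) (card_le_card ?_))
  · refine infs_subset_iff.2 fun Δ hΔ Δ' hΔ' => ?_
    rw [mem_avoiding] at hΔ hΔ' ⊢
    exact ⟨isComplex_inter hΔ.1 hΔ'.1, disjoint_union_right.2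
      ⟨hΔ.2.mono_left inter_subset_left, hΔ'.2.mono_left inter_subset_right⟩⟩
  · refine sups_subset_iff.2 fun Δ hΔ Δ' hΔ' => ?_
    rw [mem_avoiding] at hΔ hΔ' ⊢
    exact ⟨isComplex_union hΔ.1 hΔ'.1, disjoint_union_left.2
      ⟨hΔ.2.mono_right inter_subset_left, hΔ'.2.mono_right inter_subset_right⟩⟩

/-- The probability that a uniformly random complex has no face in `F`, conditioned on its having
no face in `T`. -/
def missingProb (T F : Finset (Finset (Fin n))) : ℝ :=
  #(avoiding (F ∪ T)) / #(avoiding T)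

theorem missingProb_pos : 0 < missingProb T F :=
  div_pos card_avoiding_pos card_avoiding_pos

theorem missingProb_le_missingProb_of_subset (h : T ⊆ T') :
    missingProb T F ≤ missingProb T' F := by
  have supermodular := (card_avoiding_mul_card_avoiding_le (F ∪ T) T').trans
    (Nat.mul_le_mul_left _ (card_le_card
      (avoiding_subset_avoiding (subset_inter subset_union_right h))))
  rw [union_assoc, union_eq_right.2 h] at supermodular
  rw [missingProb, missingProb, div_le_div_iff₀ card_avoiding_pos card_avoiding_pos]
  exact_mod_cast supermodular

theorem missingProb_mul_missingProb_le :
    missingProb T F * missingProb T G ≤ missingProb T (F ∪ G) := by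
  have supermodular := (card_avoiding_mul_card_avoiding_le (F ∪ T) (G ∪ T)).trans
    (Nat.mul_le_mul_left _ (card_le_card
      (avoiding_subset_avoiding (subset_inter subset_union_right subset_union_right))))
  rw [← union_union_distrib_right] at supermodular
  have hpos : (0 : ℝ) < #(avoiding T) := card_avoiding_pos
  rw [missingProb, missingProb, missingProb, div_mul_div_comm, div_le_div_iff₀ (by positivity) hpos,
    ← mul_assoc]
  exact mul_le_mul_of_nonneg_right (by exact_mod_cast supermodular) hpos.le

theorem prod_missingProb_le (T S : Finset (Finset (Fin n))) :
    ∏ x ∈ S, missingProb T {x} ≤ missingProb T S := by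
  induction S using Finset.induction_on with
  | empty =>
    simp [missingProb, card_avoiding_pos.ne']
  | insert x S hx ih =>
    rw [prod_insert hx, insert_eq]
    exact (mul_le_mul_of_nonneg_left ih missingProb_pos.le).trans missingProb_mul_missingProb_le

theorem card_avoiding_le_card_avoiding_map (σ : Equiv.Perm (Fin n)) :
    #(avoiding F) ≤ #(avoiding (F.map σ.finsetCongr.toEmbedding)) := by
  refine card_le_card_of_injOn (·.map σ.finsetCongr.toEmbedding) (fun Δ hΔ => ?_)
    (map_injective _).injOn
  obtain ⟨⟨hne, hdown⟩, hdisj⟩ := mem_avoiding.1 hΔ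
  refine mem_avoiding.2 ⟨⟨?_, ?_⟩, (disjoint_map _).2 hdisj⟩
  · exact fun x hx => by simpa using hne _ (mem_map_equiv.1 hx)
  · intro x hx y hy hyx
    rw [mem_map_equiv] at hx ⊢
    exact hdown _ hx _ (by simpa using hy) (by simpa using hyx)

theorem exists_perm_map_eq {x y : Finset (Fin n)} (h : #x = #y) :
    ∃ σ : Equiv.Perm (Fin n), x.map σ.toEmbedding = y := by
  refine ⟨(equivOfCardEq h).extendSubtype, ?_⟩
  refine eq_of_subset_of_card_le (fun b hb => ?_) (by rw [card_map, h])
  obtain ⟨a, ha, rfl⟩ := mem_map.1 hb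
  exact (equivOfCardEq h).extendSubtype_mem a ha

theorem missingProb_singleton_le_of_card_eq
    (hT : ∀ σ : Equiv.Perm (Fin n), T.map σ.finsetCongr.toEmbedding = T) {x y : Finset (Fin n)}
    (h : #x = #y) : missingProb T {x} ≤ missingProb T {y} := by
  obtain ⟨σ, rfl⟩ := exists_perm_map_eq h
  have hmap := card_avoiding_le_card_avoiding_map (F := {x} ∪ T) σ
  rw [map_union, map_singleton, hT] at hmap
  exact div_le_div_of_nonneg_right (by exact_mod_cast hmap) (Nat.cast_nonneg _)

theorem missingProb_singleton_pow_card_le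
    (hT : ∀ σ : Equiv.Perm (Fin n), T.map σ.finsetCongr.toEmbedding = T) {x : Finset (Fin n)}
    (hF : F ⊆ layer n #x) : missingProb T {x} ^ #F ≤ missingProb T F := by
  rw [← prod_const]
  refine (prod_le_prod (fun _ _ => missingProb_pos.le) fun y hy => ?_).trans
    (prod_missingProb_le T F)
  exact missingProb_singleton_le_of_card_eq hT (mem_layer.1 (hF hy)).symm

theorem uniformProb_le_one (n : ℕ) (P : Finset (Finset (Fin n)) → Prop) :
    uniformProb n P ≤ 1 :=
  div_le_one_of_le₀ (by exact_mod_cast card_filter_le _ _) (Nat.cast_nonneg _)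

theorem one_sub_uniformProb (n : ℕ) (P : Finset (Finset (Fin n)) → Prop) :
    1 - uniformProb n P =
      (#(allComplexes n \ (allComplexes n).filter P) : ℝ) / #(allComplexes n) := by
  have hpos : (#(allComplexes n) : ℝ) ≠ 0 := by
    rw [← avoiding_empty]
    exact card_avoiding_pos.ne'
  rw [uniformProb, one_sub_div hpos, cast_card_sdiff (filter_subset P (allComplexes n))]

theorem one_sub_uniformProb_complete_le {k : ℕ} (hkn : k ≤ n) :
    1 - uniformProb n (fun Δ => ∀ x : Finset (Fin n), x.Nonempty → #x ≤ k → x ∈ Δ) ≤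
      ∑ x ∈ layer n k, missingProb ∅ {x} := by
  simp only [one_sub_uniformProb, missingProb, union_empty, avoiding_empty, ← sum_div,
    ← Nat.cast_sum]
  refine div_le_div_of_nonneg_right (Nat.cast_le.2 ?_) (Nat.cast_nonneg _)
  refine (card_le_card fun Δ hΔ => ?_).trans card_biUnion_le
  obtain ⟨hΔ, hmissing⟩ := mem_sdiff.1 hΔ
  have hcomplex : IsComplex Δ := (mem_filter.1 hΔ).2
  simp only [mem_filter, hΔ, true_and, not_forall] at hmissing
  obtain ⟨x, hx, hxk, hxΔ⟩ := hmissing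
  obtain ⟨y, hxy, hy⟩ := exists_superset_card_eq hxk (by simpa using hkn)
  refine mem_biUnion.2 ⟨y, mem_layer.2 hy, mem_avoiding.2 ⟨hcomplex, ?_⟩⟩
  exact disjoint_singleton_right.2 fun hyΔ => hxΔ (hcomplex.2 y hyΔ x hx hxy)

end Avoiding

section Extension

variable {n k : ℕ} {S Z X Δ : Finset (Finset (Fin n))} {u z : Finset (Fin n)}

/-- The sets with more than `k` elements; `avoiding (above n k)` consists of the complexes all of
whose faces have at most `k` elements. -/
def above (n k : ℕ) : Finset (Finset (Fin n)) :=
  {x | k < #x}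

theorem mem_avoiding_above : Δ ∈ avoiding (above n k) ↔ IsComplex Δ ∧ ∀ x ∈ Δ, #x ≤ k := by
  simp [mem_avoiding, above, disjoint_left]

theorem above_map (σ : Equiv.Perm (Fin n)) :
    (above n k).map σ.finsetCongr.toEmbedding = above n k := by
  ext x
  simp [above, mem_map_equiv, Equiv.finsetCongr_symm]

/-- The sets of size `k + 1` whose nonempty proper subsets are all faces of `Δ`: any collection of
them can be added to a complex `Δ` whose faces have at most `k` elements. -/
def extensionFaces (Δ : Finset (Finset (Fin n))) (k : ℕ) : Finset (Finset (Fin n)) :=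
  {u ∈ layer n (k + 1) | ∀ y, y.Nonempty → y ⊂ u → y ∈ Δ}

theorem mem_extensionFaces :
    u ∈ extensionFaces Δ k ↔ #u = k + 1 ∧ ∀ y, y.Nonempty → y ⊂ u → y ∈ Δ := by
  rw [extensionFaces, mem_filter, mem_layer]

theorem union_mem_avoiding_above_succ (hΔ : Δ ∈ avoiding (above n k))
    (hX : X ⊆ extensionFaces Δ k) : Δ ∪ X ∈ avoiding (above n (k + 1)) := by
  obtain ⟨⟨hne, hdown⟩, hcard⟩ := mem_avoiding_above.1 hΔ
  have hX' : ∀ x ∈ X, #x = k + 1 ∧ ∀ y, y.Nonempty → y ⊂ x → y ∈ Δ := fun x hx =>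
    mem_extensionFaces.1 (hX hx)
  refine mem_avoiding_above.2 ⟨⟨fun x hx => ?_, fun x hx y hy hyx => ?_⟩, fun x hx => ?_⟩
  · rcases mem_union.1 hx with hx | hx
    · exact hne x hx
    · exact card_pos.1 (by linarith [(hX' x hx).1])
  · rcases mem_union.1 hx with hx | hx
    · exact mem_union_left _ (hdown x hx y hy hyx)
    · rcases hyx.eq_or_ssubset with rfl | hyx
      · exact mem_union_right _ hx
      · exact mem_union_left _ ((hX' x hx).2 y hy hyx)
  · rcases mem_union.1 hx with hx | hx
    · exact (hcard x hx).trans k.le_succ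
    · exact (hX' x hx).1.le

theorem filter_card_le_mem_avoiding_above (hΔ : IsComplex Δ) :
    {x ∈ Δ | #x ≤ k} ∈ avoiding (above n k) :=
  mem_avoiding_above.2 ⟨⟨fun x hx => hΔ.1 x (mem_filter.1 hx).1, fun x hx y hy hyx =>
    mem_filter.2 ⟨hΔ.2 x (mem_filter.1 hx).1 y hy hyx,
      (card_le_card hyx).trans (mem_filter.1 hx).2⟩⟩, fun _ hx => (mem_filter.1 hx).2⟩

theorem filter_card_eq_subset_extensionFaces (hΔ : IsComplex Δ) :
    {x ∈ Δ | #x = k + 1} ⊆ extensionFaces {x ∈ Δ | #x ≤ k} k := fun x hx => by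
  obtain ⟨hx, hxk⟩ := mem_filter.1 hx
  exact mem_extensionFaces.2 ⟨hxk, fun y hy hyx => mem_filter.2
    ⟨hΔ.2 x hx y hy hyx.subset, by linarith [card_lt_card hyx]⟩⟩

theorem sum_avoiding_above_succ {M : Type*} [AddCommMonoid M] (g : Finset (Finset (Fin n)) → M) :
    ∑ Δ ∈ avoiding (above n (k + 1)), g Δ =
      ∑ Δ ∈ avoiding (above n k), ∑ X ∈ (extensionFaces Δ k).powerset, g (Δ ∪ X) := by
  rw [sum_sigma']
  refine sum_bij' (fun Δ _ => ⟨{x ∈ Δ | #x ≤ k}, {x ∈ Δ | #x = k + 1}⟩) (fun p _ => p.1 ∪ p.2)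
    (fun Δ hΔ => ?_) (fun p hp => ?_) (fun Δ hΔ => ?_) (fun p hp => ?_) (fun Δ hΔ => ?_)
  · have hΔ := (mem_avoiding_above.1 hΔ).1
    exact mem_sigma.2 ⟨filter_card_le_mem_avoiding_above hΔ,
      mem_powerset.2 (filter_card_eq_subset_extensionFaces hΔ)⟩
  · exact union_mem_avoiding_above_succ (mem_sigma.1 hp).1 (mem_powerset.1 (mem_sigma.1 hp).2)
  · have := (mem_avoiding_above.1 hΔ).2
    grind
  · obtain ⟨hp₁, hp₂⟩ := mem_sigma.1 hp
    have card_of_mem_fst := (mem_avoiding_above.1 hp₁).2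
    have card_of_mem_snd : ∀ x ∈ p.2, #x = k + 1 := fun x hx =>
      (mem_extensionFaces.1 (mem_powerset.1 hp₂ hx)).1
    refine Sigma.ext ?_ (heq_of_eq ?_) <;> ext x <;> grind
  · congr 1
    have := (mem_avoiding_above.1 hΔ).2
    grind

theorem card_avoiding_above_succ :
    #(avoiding (above n (k + 1))) = ∑ Δ ∈ avoiding (above n k), 2 ^ #(extensionFaces Δ k) := by
  rw [card_eq_sum_ones, sum_avoiding_above_succ]
  simp only [sum_const, card_powerset, smul_eq_mul, mul_one]

/-- The sets of size `k` containing no member of `S`. -/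
def uncovered (S : Finset (Finset (Fin n))) (k : ℕ) : Finset (Finset (Fin n)) :=
  {z ∈ layer n k | ∀ s ∈ S, ¬ s ⊆ z}

theorem card_filter_uncovered_superset_le (S : Finset (Finset (Fin n))) (u : Finset (Fin n)) :
    #{z ∈ uncovered S (#u + 1) | u ⊆ z} ≤ #{a ∈ uᶜ | ∀ s ∈ S, ¬ s ⊆ insert a u} := by
  refine (card_le_card fun z hz => ?_).trans (card_image_le (f := (insert · u)))
  obtain ⟨hz, huz⟩ := mem_filter.1 hz
  obtain ⟨hzcard, hzS⟩ := mem_filter.1 hz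
  obtain ⟨a, ha, rfl⟩ := exists_eq_insert_iff.2 ⟨huz, (mem_layer.1 hzcard).symm⟩
  exact mem_image_of_mem _ (mem_filter.2 ⟨mem_compl.2 ha, hzS⟩)

theorem card_avoiding_union_above_succ_le (hS : ∀ s ∈ S, s.Nonempty) :
    #(avoiding (S ∪ above n (k + 1))) ≤
      ∑ Δ ∈ avoiding (above n k), 2 ^ #(extensionFaces Δ k ∩ uncovered S (k + 1)) := by
  have hfilter : avoiding (S ∪ above n (k + 1)) =
      {Δ ∈ avoiding (above n (k + 1)) | Disjoint Δ S} := by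
    ext Δ
    simp only [mem_avoiding, mem_filter, disjoint_union_right]
    tauto
  rw [hfilter, card_filter, sum_avoiding_above_succ]
  refine sum_le_sum fun Δ hΔ => ?_
  rw [← card_filter, ← card_powerset]
  refine card_le_card fun X hX => ?_
  obtain ⟨hX, hdisj⟩ := mem_filter.1 hX
  have hX := mem_powerset.1 hX
  have hcomplex := (mem_avoiding_above.1 (union_mem_avoiding_above_succ hΔ hX)).1
  refine mem_powerset.2 (subset_inter hX fun z hz => mem_filter.2
    ⟨mem_layer.2 (mem_extensionFaces.1 (hX hz)).1, fun s hs hsz => ?_⟩)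
  exact disjoint_left.1 hdisj (hcomplex.2 z (mem_union_right _ hz) s (hS s hs) hsz) hs

theorem powersetCard_subset_of_mem_extensionFaces_union (hΔ : Δ ∈ avoiding (above n k))
    (hz : z ∈ extensionFaces (Δ ∪ X) (k + 1)) : powersetCard (k + 1) z ⊆ X := fun u hu => by
  obtain ⟨hzcard, hfaces⟩ := mem_extensionFaces.1 hz
  obtain ⟨huz, hucard⟩ := mem_powersetCard.1 hu
  have hu := hfaces u (card_pos.1 (by lia)) (huz.ssubset_of_ne (by rintro rfl; lia))
  refine (mem_union.1 hu).resolve_left fun huΔ => ?_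
  have := (mem_avoiding_above.1 hΔ).2 u huΔ
  lia

theorem sum_avoiding_above_two_pow_card_le {D : ℕ} (hD : 0 < D) (hZ : Z ⊆ layer n (k + 2))
    (hdeg : ∀ u ∈ layer n (k + 1), #{z ∈ Z | u ⊆ z} ≤ D) :
    ∑ Δ ∈ avoiding (above n (k + 1)), (2 : ℝ) ^ #(extensionFaces Δ (k + 1) ∩ Z) ≤
      (1 + 2 ^ D / 2 ^ (k + 2)) ^ (#Z / D : ℝ) * #(avoiding (above n (k + 1))) := by
  have fibre_le : ∀ Δ ∈ avoiding (above n k),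
      ∑ X ∈ (extensionFaces Δ k).powerset, (2 : ℝ) ^ #(extensionFaces (Δ ∪ X) (k + 1) ∩ Z) ≤
        2 ^ #(extensionFaces Δ k) * (1 + 2 ^ D / 2 ^ (k + 2)) ^ (#Z / D : ℝ) := fun Δ hΔ => by
    refine (sum_le_sum fun X _ => pow_le_pow_right₀ one_le_two
      (card_le_card fun z hz => ?_)).trans
        (sum_powerset_two_pow_card_filter_subset_le _ hD (A := powersetCard (k + 1))
          (fun z hz => ?_) fun u hu => ?_)
    · exact mem_filter.2 ⟨(mem_inter.1 hz).2,
        powersetCard_subset_of_mem_extensionFaces_union hΔ (mem_inter.1 hz).1⟩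
    · rw [card_powersetCard, mem_layer.1 (hZ hz), Nat.choose_succ_self_right]
    · have hucard := (mem_extensionFaces.1 hu).1
      simpa only [mem_powersetCard, hucard, and_true] using hdeg u (mem_layer.2 hucard)
  rw [sum_avoiding_above_succ, card_avoiding_above_succ]
  push_cast
  rw [mul_sum]
  exact sum_le_sum fun Δ hΔ => (fibre_le Δ hΔ).trans_eq (mul_comm _ _)

theorem card_avoiding_union_above_le {D : ℕ} (hD : 0 < D) (hS : ∀ s ∈ S, s.Nonempty)
    (hdeg : ∀ u ∈ layer n (k + 1), #{a ∈ uᶜ | ∀ s ∈ S, ¬ s ⊆ insert a u} ≤ D) :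
    (#(avoiding (S ∪ above n (k + 2))) : ℝ) ≤
      (1 + 2 ^ D / 2 ^ (k + 2)) ^ (n.choose (k + 2) / D : ℝ) * #(avoiding (above n (k + 1))) := by
  have hsub : uncovered S (k + 2) ⊆ layer n (k + 2) := filter_subset _ _
  have hcard : (#(uncovered S (k + 2)) : ℝ) ≤ n.choose (k + 2) := by
    exact_mod_cast card_layer n (k + 2) ▸ card_le_card hsub
  have hdeg' : ∀ u ∈ layer n (k + 1), #{z ∈ uncovered S (k + 2) | u ⊆ z} ≤ D := fun u hu => by
    have hle := card_filter_uncovered_superset_le S u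
    rw [mem_layer.1 hu] at hle
    exact hle.trans (hdeg u hu)
  calc (#(avoiding (S ∪ above n (k + 2))) : ℝ)
      ≤ ∑ Δ ∈ avoiding (above n (k + 1)),
          (2 : ℝ) ^ #(extensionFaces Δ (k + 1) ∩ uncovered S (k + 2)) := by
        exact_mod_cast card_avoiding_union_above_succ_le hS
    _ ≤ (1 + 2 ^ D / 2 ^ (k + 2)) ^ (#(uncovered S (k + 2)) / D : ℝ) *
          #(avoiding (above n (k + 1))) := sum_avoiding_above_two_pow_card_le hD hsub hdeg'
    _ ≤ _ := by
        gcongr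
        exact le_add_of_nonneg_right (by positivity)

theorem two_pow_choose_le_card_avoiding_above_succ :
    2 ^ n.choose (k + 1) ≤ #(avoiding (above n (k + 1))) := by
  set skeleton : Finset (Finset (Fin n)) := {x | x.Nonempty ∧ #x ≤ k}
  have hskeleton : skeleton ∈ avoiding (above n k) := by
    refine mem_avoiding_above.2 ⟨⟨fun x hx => ?_, fun x hx y hy hyx => ?_⟩, fun x hx => ?_⟩ <;>
      simp only [skeleton, mem_filter_univ] at hx ⊢
    exacts [hx.1, ⟨hy, (card_le_card hyx).trans hx.2⟩, hx.2]
  have extensionFaces_skeleton : extensionFaces skeleton k = layer n (k + 1) :=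
    filter_eq_self.2 fun u hu y hy hyu => mem_filter_univ y |>.2
      ⟨hy, Nat.lt_succ_iff.1 ((card_lt_card hyu).trans_eq (mem_layer.1 hu))⟩
  rw [card_avoiding_above_succ, ← card_layer, ← extensionFaces_skeleton]
  exact single_le_sum (f := fun Δ => 2 ^ #(extensionFaces Δ k)) (fun _ _ => Nat.zero_le _) hskeleton

theorem card_avoiding_above_one_le (n : ℕ) : #(avoiding (above n 1)) ≤ 2 ^ n := by
  have avoiding_above_zero : avoiding (above n 0) ⊆ {∅} := fun Δ hΔ => by
    obtain ⟨⟨hne, -⟩, hcard⟩ := mem_avoiding_above.1 hΔ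
    refine mem_singleton.2 (eq_empty_of_forall_notMem fun x hx => ?_)
    exact (hne x hx).card_pos.not_ge (hcard x hx)
  rw [card_avoiding_above_succ]
  refine (sum_le_sum_of_subset avoiding_above_zero).trans ?_
  rw [sum_singleton]
  refine Nat.pow_le_pow_right two_pos ((card_le_card (filter_subset _ _)).trans_eq ?_)
  rw [card_layer, zero_add, Nat.choose_one_right]

end Extension

section Counting

variable {n k : ℕ} {S : Finset (Finset (Fin n))}

theorem log_one_add_two_pow_le (e : ℕ) :
    Real.log (1 + 2 ^ e) ≤ e * Real.log 2 + 1 / 2 ^ e := by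
  have hfactor : (1 + 2 ^ e : ℝ) = 2 ^ e * (1 + 1 / 2 ^ e) := by field_simp; ring
  rw [hfactor, Real.log_mul (by positivity) (by positivity), Real.log_pow]
  have := Real.log_le_sub_one_of_pos (show (0 : ℝ) < 1 + 1 / 2 ^ e by positivity)
  linarith

theorem succ_choose_div_mul_sub (n k : ℕ) :
    ((n + 1).choose k : ℝ) / (n + 1) * (n + 1 - k : ℕ) = n.choose k := by
  rw [div_mul_eq_mul_div, div_eq_iff (by positivity)]
  exact_mod_cast (Nat.choose_mul_succ_eq n k).symm

theorem succ_choose_succ_div_mul_succ (n k : ℕ) :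
    ((n + 1).choose (k + 1) : ℝ) / (n + 1) * (k + 1) = n.choose k := by
  rw [div_mul_eq_mul_div, div_eq_iff (by positivity), mul_comm (n.choose k : ℝ)]
  exact_mod_cast (Nat.add_one_mul_choose_eq n k).symm

theorem log_card_avoiding_union_above_le {D : ℕ} (hD : 0 < D) (hS : ∀ s ∈ S, s.Nonempty)
    (hdeg : ∀ u ∈ layer n (k + 1), #{a ∈ uᶜ | ∀ s ∈ S, ¬ s ⊆ insert a u} ≤ D) :
    Real.log #(avoiding (S ∪ above n (k + 2))) ≤
      n.choose (k + 2) / D * Real.log (1 + 2 ^ D / 2 ^ (k + 2)) +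
        Real.log #(avoiding (above n (k + 1))) := by
  rw [← Real.log_rpow (by positivity), ← Real.log_mul (by positivity) card_avoiding_pos.ne']
  exact Real.log_le_log card_avoiding_pos (card_avoiding_union_above_le hD hS hdeg)

-- With `R = choose (n + 1) (k + 1) / (n + 1)` one has `choose n (k + 1) = R * (n - k)` and
-- `choose n k = R * (k + 1)`, so the entropy bound, whose main term is `R * e * log 2`, telescopes
-- in `k`.
theorem log_card_avoiding_above_succ_le {e : ℕ} (hk : 1 ≤ k) (he : n = 2 * k + 1 + e) :
    Real.log #(avoiding (above n (k + 1))) ≤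
      (n.choose (k + 1) - n.choose k) * Real.log 2 +
        (n + 1).choose (k + 1) / (n + 1) * (1 / 2 ^ e) + Real.log #(avoiding (above n k)) := by
  obtain ⟨j, rfl⟩ := Nat.exists_eq_add_of_le' hk
  have hentropy := log_card_avoiding_union_above_le (n := n) (k := j) (D := j + 1 + 1 + e)
    (S := ∅) (by lia) (by simp) fun u hu => by
      simpa [card_compl, mem_layer.1 hu] using by lia
  rw [empty_union, pow_add _ (j + 1 + 1), mul_div_cancel_left₀ _ (by positivity)] at hentropy
  have hcofaces := succ_choose_div_mul_sub n (j + 2)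
  have hfaces := succ_choose_succ_div_mul_succ n (j + 1)
  rw [show n + 1 - (j + 2) = j + 1 + 1 + e by lia] at hcofaces
  set R : ℝ := (n + 1).choose (j + 2) / (n + 1)
  rw [← hcofaces, mul_div_cancel_right₀ _ (by positivity)] at hentropy
  have hlog := mul_le_mul_of_nonneg_left (log_one_add_two_pow_le e) (show 0 ≤ R by positivity)
  have hgap : (n.choose (j + 2) - n.choose (j + 1) : ℝ) = R * e := by
    rw [← hcofaces, ← hfaces]
    push_cast
    ring
  rw [hgap]
  linarith

theorem log_card_avoiding_above_le (hk : 1 ≤ k) (hkn : 2 * k ≤ n + 1) :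
    Real.log #(avoiding (above n k)) ≤ n.choose k * Real.log 2 +
      (n + 1).choose k / (n + 1) * (4 / 3 * (2 ^ (2 * k) / 2 ^ (n + 1))) := by
  induction k, hk using Nat.le_induction with
  | base =>
    have hcard : (#(avoiding (above n 1)) : ℝ) ≤ 2 ^ n := by
      exact_mod_cast card_avoiding_above_one_le n
    have hlog := Real.log_le_log card_avoiding_pos hcard
    rw [Real.log_pow] at hlog
    rw [Nat.choose_one_right]
    exact hlog.trans (le_add_of_nonneg_right (by positivity))
  | succ k hk ih =>
    obtain ⟨e, he⟩ : ∃ e, n = 2 * k + 1 + e := Nat.exists_eq_add_of_le (by lia)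
    have hstep := log_card_avoiding_above_succ_le hk he
    have hmono : ((n + 1).choose k : ℝ) / (n + 1) ≤ (n + 1).choose (k + 1) / (n + 1) := by
      gcongr
      exact Nat.choose_le_succ_of_lt_half_left (by lia)
    have herror : (2 : ℝ) ^ (2 * k) / 2 ^ (n + 1) = 1 / 4 * (1 / 2 ^ e) := by
      rw [he]; field_simp; ring
    have herror_succ : (2 : ℝ) ^ (2 * (k + 1)) / 2 ^ (n + 1) = 1 / 2 ^ e := by
      rw [he]; field_simp; ring
    have ih := ih (by lia)
    rw [herror] at ih
    rw [herror_succ]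
    have := mul_le_mul_of_nonneg_right hmono (show (0 : ℝ) ≤ 1 / 3 * (1 / 2 ^ e) by positivity)
    linarith

theorem two_mul_succ_choose_succ_eq_mul_catalan (k : ℕ) :
    ((2 * (k + 1)).choose (k + 1) : ℝ) = (k + 2) * catalan (k + 1) := by
  exact_mod_cast (succ_mul_catalan_eq_centralBinom (k + 1)).symm

theorem succ_choose_div_eq_catalan (k : ℕ) :
    ((2 * (k + 1) + 1).choose (k + 1) : ℝ) / ((2 * (k + 1) : ℕ) + 1) = catalan (k + 1) := by
  have hmiddle := succ_choose_div_mul_sub (2 * (k + 1)) (k + 1)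
  rw [show 2 * (k + 1) + 1 - (k + 1) = k + 2 by lia, two_mul_succ_choose_succ_eq_mul_catalan,
    mul_comm] at hmiddle
  exact mul_left_cancel₀ (show (k : ℝ) + 2 ≠ 0 by positivity) (by exact_mod_cast hmiddle)

theorem two_mul_succ_choose_eq_mul_catalan (k : ℕ) :
    ((2 * (k + 1)).choose k : ℝ) = (k + 1) * catalan (k + 1) := by
  rw [← succ_choose_succ_div_mul_succ, succ_choose_div_eq_catalan, mul_comm]

theorem log_card_avoiding_above_le_catalan (hk : 1 ≤ k) :
    Real.log #(avoiding (above (2 * (k + 1)) k)) ≤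
      (k + 1) * catalan (k + 1) * Real.log 2 + catalan (k + 1) / 6 := by
  have hbound := log_card_avoiding_above_le (n := 2 * (k + 1)) hk (by lia)
  have herror : (4 / 3 * (2 ^ (2 * k) / 2 ^ (2 * (k + 1) + 1)) : ℝ) = 1 / 6 := by
    field_simp; ring
  have hmono : ((2 * (k + 1) + 1).choose k : ℝ) / ((2 * (k + 1) : ℕ) + 1) ≤
      catalan (k + 1) := by
    rw [← succ_choose_div_eq_catalan]
    gcongr
    exact Nat.choose_le_succ_of_lt_half_left (by lia)
  rw [herror, two_mul_succ_choose_eq_mul_catalan] at hbound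
  linarith

theorem le_log_card_avoiding_above (k : ℕ) :
    (k + 2) * catalan (k + 1) * Real.log 2 ≤
      Real.log #(avoiding (above (2 * (k + 1)) (k + 1))) := by
  rw [← two_mul_succ_choose_succ_eq_mul_catalan, ← Real.log_pow]
  exact Real.log_le_log (by positivity)
    (by exact_mod_cast two_pow_choose_le_card_avoiding_above_succ)

theorem log_missingProb_above_le {S : Finset (Finset (Fin (2 * (k + 2))))} (hk : 30 ≤ k)
    (hS : ∀ s ∈ S, s.Nonempty)
    (hdeg : ∀ u ∈ layer (2 * (k + 2)) (k + 1), #{a ∈ uᶜ | ∀ s ∈ S, ¬ s ⊆ insert a u} ≤ k) :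
    Real.log (missingProb (above (2 * (k + 2)) (k + 2)) S) ≤ -(catalan (k + 2) / 4) := by
  have hk' : (30 : ℝ) ≤ k := by exact_mod_cast hk
  have hupper := log_card_avoiding_union_above_le (D := k) (by lia) hS hdeg
  have hskeleton := log_card_avoiding_above_le_catalan (k := k + 1) (by lia)
  have hlower := le_log_card_avoiding_above (k + 1)
  have hratio : (1 + 2 ^ k / 2 ^ (k + 2) : ℝ) = 5 / 4 := by field_simp; ring
  have hlog : Real.log (5 / 4) ≤ 1 / 4 := by
    linarith [Real.log_le_sub_one_of_pos (show (0 : ℝ) < 5 / 4 by norm_num)]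
  have hexponent : ((2 * (k + 2)).choose (k + 2) : ℝ) / k ≤ 11 / 10 * catalan (k + 2) := by
    rw [two_mul_succ_choose_succ_eq_mul_catalan, div_le_iff₀ (by linarith)]
    have := mul_le_mul_of_nonneg_right hk' (Nat.cast_nonneg (α := ℝ) (catalan (k + 2)))
    push_cast
    linarith
  rw [missingProb, Real.log_div card_avoiding_pos.ne' card_avoiding_pos.ne']
  rw [hratio] at hupper
  push_cast at hskeleton hlower
  have hentropy := mul_le_mul hexponent hlog (Real.log_nonneg (by norm_num)) (by positivity)
  have hlog_two := mul_le_mul_of_nonneg_left Real.log_two_gt_d9.le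
    (Nat.cast_nonneg (α := ℝ) (catalan (k + 2)))
  linarith

end Counting

section Covering

variable {n : ℕ}

theorem card_mul_choose_le_card_filter_subset_insert {u G : Finset (Fin n)} (hG : G ⊆ uᶜ)
    (j : ℕ) : #G * (#u).choose j ≤ #{x ∈ layer n (j + 1) | ∃ a ∈ G, x ⊆ insert a u} := by
  rw [← card_powersetCard, ← card_product]
  have insert_sdiff_and_inter : ∀ p ∈ G ×ˢ powersetCard j u,
      insert p.1 p.2 \ u = {p.1} ∧ insert p.1 p.2 ∩ u = p.2 := fun p hp => by
    obtain ⟨ha, hy⟩ := mem_product.1 hp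
    have ha := mem_compl.1 (hG ha)
    have hy := (mem_powersetCard.1 hy).1
    rw [insert_sdiff_of_notMem _ ha, sdiff_eq_empty_iff_subset.2 hy, insert_empty_eq,
      insert_inter_of_notMem ha, inter_eq_left.2 hy]
    exact ⟨rfl, rfl⟩
  refine card_le_card_of_injOn (fun p => insert p.1 p.2) (fun p hp => ?_)
    fun p hp q hq (hpq : insert p.1 p.2 = insert q.1 q.2) => ?_
  · obtain ⟨ha, hy⟩ := mem_product.1 hp
    obtain ⟨hyu, hycard⟩ := mem_powersetCard.1 hy
    refine mem_filter.2 ⟨mem_layer.2 ?_, p.1, ha, insert_subset_insert _ hyu⟩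
    rw [card_insert_of_notMem fun h => mem_compl.1 (hG ha) (hyu h), hycard]
  · obtain ⟨hp₁, hp₂⟩ := insert_sdiff_and_inter p hp
    obtain ⟨hq₁, hq₂⟩ := insert_sdiff_and_inter q hq
    rw [hpq] at hp₁ hp₂
    exact Prod.ext (singleton_injective (hp₁.symm.trans hq₁)) (hp₂.symm.trans hq₂)

-- A pair of an `l`-set `u` and `g` vertices outside it is hit by `x` if `x ⊆ insert a u` for one of
-- these vertices `a`; hitting all pairs leaves fewer than `g` bad vertices for every `u`.
theorem exists_covering_of_cofaces {j l g : ℕ} (hj : j ≤ l) (hg : 0 < g) (hjn : j + 1 ≤ n)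
    (t : ℕ) :
    ∃ S ⊆ layer n (j + 1),
      #S ≤ t + Real.exp (-(g * l.choose j / n.choose (j + 1) * t)) *
        (n.choose l * (n - l).choose g) ∧
      ∀ u ∈ layer n l, #{a ∈ uᶜ | ∀ s ∈ S, ¬ s ⊆ insert a u} < g := by
  have choose_pos : (0 : ℝ) < n.choose (j + 1) := by exact_mod_cast Nat.choose_pos hjn
  obtain ⟨S, hSX, hScard, hit⟩ := exists_hitting_set (X := layer n (j + 1))
    (Q := (layer n l).sigma fun u => powersetCard g uᶜ)
    (r := fun x q => ∃ a ∈ q.2, x ⊆ insert a q.1) (δ := g * l.choose j / n.choose (j + 1))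
    (card_pos.1 (by rw [card_layer]; exact Nat.choose_pos hjn))
    (by have := Nat.choose_pos hj; positivity)
    (fun q hq => by
      obtain ⟨hu, hG⟩ := mem_sigma.1 hq
      obtain ⟨hG, hGcard⟩ := mem_powersetCard.1 hG
      have hcount := card_mul_choose_le_card_filter_subset_insert hG j
      rw [hGcard, mem_layer.1 hu] at hcount
      rw [card_layer, div_mul_cancel₀ _ choose_pos.ne']
      exact_mod_cast hcount) t
  have card_pairs : #((layer n l).sigma fun u => powersetCard g uᶜ) =
      n.choose l * (n - l).choose g := by
    rw [card_sigma, sum_congr rfl fun u hu => by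
      rw [card_powersetCard, card_compl, Fintype.card_fin, mem_layer.1 hu], sum_const, card_layer,
      smul_eq_mul]
  refine ⟨S, hSX, by rw [card_pairs] at hScard; exact_mod_cast hScard, fun u hu => ?_⟩
  by_contra! hg
  obtain ⟨G, hG, hGcard⟩ := exists_subset_card_eq hg
  obtain ⟨s, hs, a, ha, hsa⟩ := hit ⟨u, G⟩
    (mem_sigma.2 ⟨hu, mem_powersetCard.2 ⟨hG.trans (filter_subset _ _), hGcard⟩⟩)
  exact (mem_filter.1 (hG ha)).2 s hs hsa

theorem eventually_mul_add_pow_le_exp :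
    ∀ᶠ j : ℕ in Filter.atTop, 32 * ((j : ℝ) + 4) ^ 4 ≤ Real.exp (j / 64) := by
  have hlittle := (isLittleO_pow_exp_pos_mul_atTop 4 (show (0 : ℝ) < 1 / 64 by norm_num)).bound
    (show 0 < Real.exp (-(1 / 16)) / 32 by positivity)
  have hshift : Filter.Tendsto (fun j : ℕ => (j : ℝ) + 4) Filter.atTop Filter.atTop :=
    Filter.tendsto_atTop_add_const_right _ _ tendsto_natCast_atTop_atTop
  filter_upwards [hshift.eventually hlittle] with j hj
  rw [Real.norm_of_nonneg (by positivity), Real.norm_of_nonneg (by positivity),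
    div_mul_eq_mul_div, ← Real.exp_add, le_div_iff₀' (by norm_num)] at hj
  convert! hj using 2
  ring

theorem mul_le_catalan_of_mul_pow_le_exp {j : ℕ}
    (hj : 32 * ((j : ℝ) + 4) ^ 4 ≤ Real.exp (j / 64)) : 32 * ((j : ℝ) + 3) ≤ catalan (j + 3) := by
  have hexp : Real.exp (j / 64) ≤ 4 ^ (j + 3) := by
    calc Real.exp (j / 64) ≤ Real.exp (j + 3 : ℕ) := by
          gcongr
          push_cast
          linarith [Nat.cast_nonneg (α := ℝ) j]
      _ = Real.exp 1 ^ (j + 3) := by rw [← Real.exp_nat_mul, mul_one]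
      _ ≤ 4 ^ (j + 3) := by
          gcongr
          linarith [Real.exp_one_lt_d9]
  have hcentral : (4 : ℝ) ^ (j + 3) ≤ 2 * (j + 3) * ((j + 4) * catalan (j + 3)) := by
    exact_mod_cast (Nat.four_pow_le_two_mul_self_mul_centralBinom (j + 3) (by lia)).trans_eq
      (by rw [← succ_mul_catalan_eq_centralBinom])
  have hj₀ : (0 : ℝ) ≤ j := Nat.cast_nonneg j
  refine le_of_mul_le_mul_left (a := 2 * ((j : ℝ) + 3) * (j + 4)) ?_ (by positivity)
  have : 64 * ((j : ℝ) + 3) ^ 2 * (j + 4) ≤ 32 * (j + 4) ^ 4 := by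
    nlinarith [pow_nonneg hj₀ 2, pow_nonneg hj₀ 3, pow_nonneg hj₀ 4]
  linarith

-- From here on `m = j + 3`, so that `m - 2` is `j + 1`.
theorem div_le_choose_div_choose_mul {j : ℕ} {t : ℝ} (ht : catalan (j + 3) / (16 * (j + 3)) ≤ t) :
    (j : ℝ) / 64 ≤ (j + 2 : ℕ) * (j + 2).choose j / (2 * (j + 3)).choose (j + 1) * t := by
  have hj : (0 : ℝ) ≤ j := Nat.cast_nonneg j
  have choose_eq : ((j + 2).choose j : ℝ) = (j + 2) * (j + 1) / 2 := by
    rw [Nat.choose_symm_add, Nat.cast_choose_two]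
    push_cast
    ring
  have choose_pos : (0 : ℝ) < (2 * (j + 3)).choose (j + 1) := by
    exact_mod_cast Nat.choose_pos (by lia)
  have choose_le : ((2 * (j + 3)).choose (j + 1) : ℝ) ≤ (j + 4) * catalan (j + 3) := by
    exact_mod_cast (Nat.choose_le_centralBinom _ _).trans_eq
      (succ_mul_catalan_eq_centralBinom (j + 3)).symm
  have hpoly : (j : ℝ) * (j + 3) * (j + 4) ≤ 2 * (j + 2) ^ 2 * (j + 1) := by
    nlinarith [pow_nonneg hj 2, pow_nonneg hj 3]
  have ht₀ : 0 ≤ t := le_trans (by positivity) ht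
  rw [div_le_iff₀ (by positivity)] at ht
  rw [choose_eq, div_mul_eq_mul_div, le_div_iff₀ choose_pos]
  calc (j : ℝ) / 64 * (2 * (j + 3)).choose (j + 1)
      ≤ j / 64 * ((j + 4) * (t * (16 * (j + 3)))) := by
        gcongr
        exact choose_le.trans (by gcongr)
    _ = j * (j + 3) * (j + 4) / 4 * t := by ring
    _ ≤ 2 * (j + 2) ^ 2 * (j + 1) / 4 * t := by gcongr
    _ = (j + 2 : ℕ) * ((j + 2) * (j + 1) / 2) * t := by
        push_cast
        ring

theorem choose_mul_choose_le_pow_mul_catalan (j : ℕ) :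
    ((2 * (j + 3)).choose (j + 2) * (2 * (j + 3) - (j + 2)).choose (j + 2) : ℝ) ≤
      (j + 4) ^ 3 * catalan (j + 3) := by
  have choose_le : ((2 * (j + 3) - (j + 2)).choose (j + 2) : ℝ) ≤ (j + 4) ^ 2 := by
    rw [show 2 * (j + 3) - (j + 2) = j + 2 + 2 by lia, Nat.choose_symm_add]
    exact_mod_cast Nat.choose_le_pow _ _
  have hchoose := two_mul_succ_choose_eq_mul_catalan (j + 2)
  push_cast at hchoose
  calc ((2 * (j + 3)).choose (j + 2) * (2 * (j + 3) - (j + 2)).choose (j + 2) : ℝ)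
      ≤ (j + 2 + 1) * catalan (j + 3) * (j + 4) ^ 2 := by rw [hchoose]; gcongr
    _ ≤ (j + 4) * catalan (j + 3) * (j + 4) ^ 2 := by gcongr ?_ * _ * _; linarith
    _ = (j + 4) ^ 3 * catalan (j + 3) := by ring

theorem exists_covering_card_le_catalan {j : ℕ}
    (hj : 32 * ((j : ℝ) + 4) ^ 4 ≤ Real.exp (j / 64)) :
    ∃ S ⊆ layer (2 * (j + 3)) (j + 1), (#S : ℝ) ≤ catalan (j + 3) / (8 * (j + 3)) ∧
      ∀ u ∈ layer (2 * (j + 3)) (j + 2), #{a ∈ uᶜ | ∀ s ∈ S, ¬ s ⊆ insert a u} ≤ j + 1 := by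
  set C : ℝ := ((catalan (j + 3) : ℕ) : ℝ)
  obtain ⟨S, hSlayer, hScard, hScover⟩ := exists_covering_of_cofaces (n := 2 * (j + 3)) (j := j)
    (l := j + 2) (g := j + 2) (by lia) (by lia) (by lia) ⌈C / (16 * (j + 3))⌉₊
  refine ⟨S, hSlayer, hScard.trans ?_, fun u hu => Nat.lt_succ_iff.1 (hScover u hu)⟩
  have hceil := (Nat.ceil_lt_add_one (show 0 ≤ C / (16 * (j + 3)) by positivity)).le
  have hone : 1 ≤ C / (32 * (j + 3)) := by
    rw [le_div_iff₀ (by positivity), one_mul]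
    exact mul_le_catalan_of_mul_pow_le_exp hj
  have hfail : Real.exp (-((j + 2 : ℕ) * (j + 2).choose j / (2 * (j + 3)).choose (j + 1) *
      ⌈C / (16 * (j + 3))⌉₊)) *
        ((2 * (j + 3)).choose (j + 2) * (2 * (j + 3) - (j + 2)).choose (j + 2)) ≤
      C / (32 * (j + 3)) := by
    calc _ ≤ Real.exp (-(j / 64)) * ((j + 4) ^ 3 * C) := by
          gcongr ?_ * ?_
          · exact Real.exp_le_exp.2 (neg_le_neg (div_le_choose_div_choose_mul (Nat.le_ceil _)))
          · exact choose_mul_choose_le_pow_mul_catalan j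
      _ ≤ (32 * ((j : ℝ) + 4) ^ 4)⁻¹ * ((j + 4) ^ 3 * C) := by
          rw [Real.exp_neg]
          gcongr
      _ = C / (32 * (j + 4)) := by field_simp
      _ ≤ C / (32 * (j + 3)) := by
          gcongr
          norm_num
  calc _ ≤ C / (16 * (j + 3)) + C / (32 * (j + 3)) + C / (32 * (j + 3)) := by
        push_cast at hfail ⊢
        linarith
    _ = C / (8 * (j + 3)) := by
        field_simp
        ring

end Covering

section MissingFace

variable {j : ℕ}

theorem missingProb_above_singleton_le_exp (hj₂₉ : 29 ≤ j)
    (hj : 32 * ((j : ℝ) + 4) ^ 4 ≤ Real.exp (j / 64)) {x : Finset (Fin (2 * (j + 3)))}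
    (hx : #x = j + 1) :
    missingProb (above (2 * (j + 3)) (j + 3)) {x} ≤ Real.exp (-(2 * (j + 3))) := by
  obtain ⟨S, hSlayer, hScard, hScover⟩ := exists_covering_card_le_catalan hj
  have hpow := missingProb_singleton_pow_card_le (T := above (2 * (j + 3)) (j + 3)) (x := x)
    above_map (hx ▸ hSlayer)
  have hnonempty : ∀ s ∈ S, s.Nonempty := fun s hs =>
    card_pos.1 (by rw [mem_layer.1 (hSlayer hs)]; exact j.succ_pos)
  have hlog : #S * Real.log (missingProb (above (2 * (j + 3)) (j + 3)) {x}) ≤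
      -(catalan (j + 3) / 4) := by
    rw [← Real.log_pow]
    exact (Real.log_le_log (pow_pos missingProb_pos _) hpow).trans
      (log_missingProb_above_le (k := j + 1) (by lia) hnonempty hScover)
  have hcatalan : (0 : ℝ) < catalan (j + 3) :=
    lt_of_lt_of_le (by positivity) (mul_le_catalan_of_mul_pow_le_exp hj)
  have hSpos : (0 : ℝ) < #S := by
    refine (Nat.cast_nonneg _).lt_of_ne fun hzero => ?_
    rw [← hzero] at hlog
    linarith
  rw [le_div_iff₀ (by positivity)] at hScard
  rw [← Real.log_le_iff_le_exp missingProb_pos]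
  exact le_of_mul_le_mul_left (by linarith) hSpos

theorem one_sub_uniformProb_complete_le_pow (hj₂₉ : 29 ≤ j)
    (hj : 32 * ((j : ℝ) + 4) ^ 4 ≤ Real.exp (j / 64)) :
    1 - uniformProb (2 * (j + 3)) (fun Δ => ∀ x, x.Nonempty → #x ≤ j + 1 → x ∈ Δ) ≤
      (4 * Real.exp (-2)) ^ (j + 3) := by
  calc _ ≤ ∑ x ∈ layer (2 * (j + 3)) (j + 1), missingProb ∅ {x} :=
        one_sub_uniformProb_complete_le (by lia)
    _ ≤ ∑ _x ∈ layer (2 * (j + 3)) (j + 1), Real.exp (-(2 * (j + 3))) :=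
        sum_le_sum fun x hx => (missingProb_le_missingProb_of_subset (empty_subset _)).trans
          (missingProb_above_singleton_le_exp hj₂₉ hj (mem_layer.1 hx))
    _ = (2 * (j + 3)).choose (j + 1) * Real.exp (-(2 * (j + 3))) := by
        rw [sum_const, card_layer, nsmul_eq_mul]
    _ ≤ 2 ^ (2 * (j + 3)) * Real.exp (-(2 * (j + 3))) := by
        gcongr
        exact_mod_cast Nat.choose_le_two_pow _ _
    _ = (4 * Real.exp (-2)) ^ (j + 3) := by
        rw [mul_pow, ← Real.exp_nat_mul, pow_mul]
        push_cast
        ring_nf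

end MissingFace

theorem tendsto_four_mul_exp_neg_two_pow :
    Filter.Tendsto (fun m : ℕ => (4 * Real.exp (-2)) ^ m) Filter.atTop (nhds 0) := by
  refine tendsto_pow_atTop_nhds_zero_of_lt_one (by positivity) ?_
  have : (4 : ℝ) < Real.exp 2 := by
    rw [show (2 : ℝ) = 1 + 1 by norm_num, Real.exp_add]
    nlinarith [Real.exp_one_gt_d9]
  rwa [Real.exp_neg, ← div_eq_mul_inv, div_lt_one (Real.exp_pos _)]

/-- For `Δ ~ U(n)` with `n` even, with high probability `Δ` has a complete
`(n/2 - 2)`-skeleton. -/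
theorem stmt0 :
    Filter.Tendsto (fun m : ℕ =>
      uniformProb (2 * m) (fun Δ =>
        ∀ x : Finset (Fin (2 * m)), x.Nonempty → x.card ≤ m - 2 → x ∈ Δ))
      Filter.atTop (nhds 1) := by
  rw [← Filter.tendsto_add_atTop_iff_nat 3]
  have herror : Filter.Tendsto (fun j : ℕ => 1 - (4 * Real.exp (-2)) ^ (j + 3))
      Filter.atTop (nhds 1) := by
    simpa only [sub_zero] using
      ((Filter.tendsto_add_atTop_iff_nat 3).2 tendsto_four_mul_exp_neg_two_pow).const_sub 1
  refine tendsto_of_tendsto_of_tendsto_of_le_of_le' herror tendsto_const_nhds ?_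
    (Filter.Eventually.of_forall fun j => uniformProb_le_one _ _)
  filter_upwards [Filter.eventually_ge_atTop 29, eventually_mul_add_pow_le_exp] with j hj₂₉ hj
  exact sub_le_comm.1 (one_sub_uniformProb_complete_le_pow hj₂₉ hj)
end
end

section
/- Fix a real constant 0 < c < 1 and an integer k ≥ 2, and set C = α(c)·k!/(1−c)^k. There exists a constant q = q(c,k) > 0 such that the following holds: for n ranging over values with cn ∈ ℕ, let t = cn, t' = t − k, and p_n = n^{−(k−1)}·(C − q·(1−c)^{−k}·k!·(log n)/n). If Δ ∼ RP(n,t,p_n), then the probability that Δ has a complete t'-skeleton tends to 0 as n → ∞. -/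
open scoped Classical

noncomputable section

/-- The natural-log entropy function `α(c)`. -/
def entropy (c : ℝ) : ℝ := -c * Real.log c - (1 - c) * Real.log (1 - c)

/-- The simplicial complex generated by a family `F` of facets: all nonempty
subsets of members of `F`. -/
def genComplex {n : ℕ} (F : Finset (Finset (Fin n))) : Finset (Finset (Fin n)) :=
  Finset.univ.filter (fun x => x.Nonempty ∧ ∃ f ∈ F, x ⊆ f)

/-- The probability, under the random pure model `RP(n,t,p)` (each `t`-subset of
`[n]` is taken as a facet independently with probability `p`), of the event `P`
for the generated complex. -/
def rpProb (n t : ℕ) (p : ℝ) (P : Finset (Finset (Fin n)) → Prop) : ℝ :=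
  ∑ F ∈ (Finset.univ.filter (fun s : Finset (Fin n) => s.card = t)).powerset,
    (if P (genComplex F) then p ^ F.card * (1 - p) ^ (Nat.choose n t - F.card) else 0)

/-!
A family of `s`-sets, `s = t - k`, whose stars (the `t`-sets containing them) are pairwise disjoint
is covered by the random facets independently, each member remaining uncovered with probability
`u = (1 - p) ^ (n - s).choose k`. A star meets at most `n ^ (2 * k)` others, so a maximal such
family has at least `n.choose s / n ^ (2 * k)` members, and a complete skeleton has probability at
most `exp (-(n.choose s / n ^ (2 * k) * u))`. By Stirling's formula `n.choose s` is `exp (α(c) n)`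
up to polynomial factors, while `u` is `exp (-α(c) n) * n ^ q` up to a constant factor, so a
sufficiently large `q` makes the exponent tend to `-∞`.
-/

section RandomSubset

open Finset

variable {α β : Type*}

/-- The expectation of `X F` for the random subset `F` of `T` that contains each element of `T`
independently with probability `p`, as a finite sum over the subsets of `T`. -/
def randomSubsetExp (T : Finset β) (p : ℝ) (X : Finset β → ℝ) : ℝ :=
  ∑ F ∈ T.powerset, p ^ #F * (1 - p) ^ (#T - #F) * X F

lemma randomSubsetExp_mono {T : Finset β} {p : ℝ} (hp0 : 0 ≤ p) (hp1 : p ≤ 1)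
    {X Y : Finset β → ℝ} (hXY : ∀ F ⊆ T, X F ≤ Y F) :
    randomSubsetExp T p X ≤ randomSubsetExp T p Y := by
  have : 0 ≤ 1 - p := sub_nonneg.2 hp1
  refine sum_le_sum fun F hF => mul_le_mul_of_nonneg_left (hXY F (mem_powerset.1 hF)) ?_
  positivity

variable [DecidableEq β]

lemma randomSubsetExp_disjoint {T U : Finset β} (hU : U ⊆ T) (p : ℝ) :
    randomSubsetExp T p (fun F => if Disjoint F U then 1 else 0) = (1 - p) ^ #U := by
  have powerset_filter : {F ∈ T.powerset | Disjoint F U} = (T \ U).powerset := by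
    ext F
    simp only [mem_filter, mem_powerset, subset_sdiff]
  calc randomSubsetExp T p (fun F => if Disjoint F U then 1 else 0)
      = ∑ F ∈ (T \ U).powerset, p ^ #F * (1 - p) ^ (#T - #F) := by
        simp only [randomSubsetExp, mul_ite, mul_one, mul_zero, ← sum_filter, powerset_filter]
    _ = ∑ F ∈ (T \ U).powerset, (1 - p) ^ #U * (p ^ #F * (1 - p) ^ (#(T \ U) - #F)) := by
        refine sum_congr rfl fun F hF => ?_
        have hF_card := card_le_card (mem_powerset.1 hF)
        have hT_card := card_sdiff_add_card_eq_card hU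
        rw [show #T - #F = #U + (#(T \ U) - #F) by lia, pow_add]
        ring
    _ = (1 - p) ^ #U := by
        rw [← mul_sum, sum_pow_mul_eq_add_pow, add_sub_cancel, one_pow, mul_one]

-- Inclusion–exclusion reduces the independence of the events `F ∩ S a ≠ ∅` to the probabilities
-- of avoiding the unions of the `S a`.
lemma randomSubsetExp_forall_not_disjoint {T : Finset β} (p : ℝ) {A : Finset α}
    {S : α → Finset β} (hST : ∀ a ∈ A, S a ⊆ T) (hS : (A : Set α).PairwiseDisjoint S) :
    randomSubsetExp T p (fun F => if ∀ a ∈ A, ¬ Disjoint F (S a) then 1 else 0) =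
      ∏ a ∈ A, (1 - (1 - p) ^ #(S a)) := by
  have indicator_eq (F : Finset β) : (if ∀ a ∈ A, ¬ Disjoint F (S a) then (1 : ℝ) else 0) =
      ∑ B ∈ A.powerset, (-1) ^ #B * if Disjoint F (B.biUnion S) then 1 else 0 := by
    have one_sub_ite (a : α) : (if ¬ Disjoint F (S a) then (1 : ℝ) else 0) =
        1 - if Disjoint F (S a) then 1 else 0 := by split_ifs <;> simp
    rw [← prod_boole, prod_congr rfl fun a _ => one_sub_ite a, prod_sub]
    simp only [prod_const_one, mul_one, prod_boole, disjoint_biUnion_right]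
  have avoid_biUnion (B : Finset α) (hB : B ∈ A.powerset) :
      randomSubsetExp T p (fun F => if Disjoint F (B.biUnion S) then 1 else 0) =
        ∏ a ∈ B, (1 - p) ^ #(S a) := by
    have hBA := mem_powerset.1 hB
    rw [randomSubsetExp_disjoint (biUnion_subset.2 fun a ha => hST a (hBA ha)),
      card_biUnion (hS.subset (coe_subset.2 hBA)), prod_pow_eq_pow_sum]
  calc randomSubsetExp T p (fun F => if ∀ a ∈ A, ¬ Disjoint F (S a) then 1 else 0)
      = ∑ B ∈ A.powerset, (-1) ^ #B *
          randomSubsetExp T p (fun F => if Disjoint F (B.biUnion S) then 1 else 0) := by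
        simp only [randomSubsetExp, indicator_eq, mul_sum]
        rw [sum_comm]
        exact sum_congr rfl fun B _ => sum_congr rfl fun F _ => mul_left_comm _ _ _
    _ = ∏ a ∈ A, (1 - (1 - p) ^ #(S a)) := by
        rw [sum_congr rfl fun B hB => congrArg _ (avoid_biUnion B hB), prod_sub]
        simp only [prod_const_one, mul_one]

end RandomSubset

section Packing

open Finset

variable {α β : Type*} [DecidableEq β]

-- A maximal disjoint subfamily works: each member of `Y` meets one of its members.
lemma exists_pairwiseDisjoint_card_le_mul {Y : Finset α} {S : α → Finset β} {D : ℕ}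
    (hne : ∀ a ∈ Y, (S a).Nonempty) (hD : ∀ a ∈ Y, #{b ∈ Y | ¬ Disjoint (S a) (S b)} ≤ D) :
    ∃ A ⊆ Y, (A : Set α).PairwiseDisjoint S ∧ #Y ≤ #A * D := by
  obtain ⟨A, hA⟩ := exists_maximal
    (s := Y.powerset.filter fun A : Finset α => (A : Set α).PairwiseDisjoint S) ⟨∅, by simp⟩
  simp only [mem_filter, mem_powerset] at hA
  obtain ⟨hAY, hAdisj⟩ := hA.prop
  refine ⟨A, hAY, hAdisj, ?_⟩
  have hcover : Y ⊆ A.biUnion fun a => {b ∈ Y | ¬ Disjoint (S a) (S b)} := by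
    intro y hy
    by_contra hmiss
    have hdisj : ∀ a ∈ A, Disjoint (S a) (S y) := by simpa [hy] using hmiss
    have hyA : y ∈ A := hA.le_of_ge (y := insert y A)
      ⟨insert_subset hy hAY, by
        rw [coe_insert]
        exact hAdisj.insert fun a ha _ => (hdisj a ha).symm⟩
      (subset_insert y A) (mem_insert_self y A)
    exact (hne y hy).ne_empty (disjoint_self_iff_empty _ |>.1 (hdisj y hyA))
  exact (card_le_card hcover).trans (card_biUnion_le_card_mul _ _ _ fun a ha => hD a (hAY ha))

end Packing

section Stars

open Finset

variable {α : Type*} [Fintype α] [DecidableEq α] {s k : ℕ} {x : Finset α}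

/-- The facets a random pure complex may use to cover `x`: the `t`-element sets containing `x`. -/
def facetStar (t : ℕ) (x : Finset α) : Finset (Finset α) :=
  {f ∈ powersetCard t univ | x ⊆ f}

lemma mem_facetStar {t : ℕ} {f : Finset α} : f ∈ facetStar t x ↔ #f = t ∧ x ⊆ f := by
  simp only [facetStar, mem_filter, mem_powersetCard_univ]

lemma facetStar_subset (t : ℕ) (x : Finset α) : facetStar t x ⊆ powersetCard t univ :=
  filter_subset _ _

lemma card_facetStar (hx : #x = s) :
    #(facetStar (s + k) x) = (Fintype.card α - s).choose k := by
  rw [facetStar, card_filter_powersetCard_subset _ _ _ (subset_univ x) (by lia), hx, card_univ,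
    Nat.add_sub_cancel_left]

lemma facetStar_nonempty (hx : #x = s) (hs : s + k ≤ Fintype.card α) :
    (facetStar (s + k) x).Nonempty := by
  rw [← card_pos, card_facetStar hx]
  exact Nat.choose_pos (by lia)

lemma card_filter_facetStar_not_disjoint_le (hx : #x = s) (hs : s + k ≤ Fintype.card α) :
    #{y ∈ powersetCard s (univ : Finset α) |
        ¬ Disjoint (facetStar (s + k) x) (facetStar (s + k) y)} ≤
      Fintype.card α ^ (2 * k) := by
  have hsub : {y ∈ powersetCard s (univ : Finset α) |
        ¬ Disjoint (facetStar (s + k) x) (facetStar (s + k) y)} ⊆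
      (facetStar (s + k) x).biUnion (powersetCard s) := by
    intro y hy
    obtain ⟨hys, hmeet⟩ := mem_filter.1 hy
    obtain ⟨f, hfx, hfy⟩ := not_disjoint_iff.1 hmeet
    exact mem_biUnion.2 ⟨f, hfx, mem_powersetCard.2
      ⟨(mem_facetStar.1 hfy).2, mem_powersetCard_univ.1 hys⟩⟩
  have hfacet : ∀ f ∈ facetStar (s + k) x, #(powersetCard s f) ≤ Fintype.card α ^ k := by
    intro f hf
    rw [card_powersetCard, (mem_facetStar.1 hf).1, Nat.choose_symm_add]
    exact (Nat.choose_le_pow _ _).trans (Nat.pow_le_pow_left hs k)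
  calc _ ≤ #(facetStar (s + k) x) * Fintype.card α ^ k :=
        (card_le_card hsub).trans (card_biUnion_le_card_mul _ _ _ hfacet)
    _ ≤ Fintype.card α ^ k * Fintype.card α ^ k := by
        rw [card_facetStar hx]
        gcongr
        exact (Nat.choose_le_pow _ _).trans (Nat.pow_le_pow_left (Nat.sub_le _ _) k)
    _ = Fintype.card α ^ (2 * k) := by rw [two_mul, pow_add]

lemma exists_pairwiseDisjoint_facetStar (hs : s + k ≤ Fintype.card α) :
    ∃ A ⊆ powersetCard s (univ : Finset α),
      (A : Set (Finset α)).PairwiseDisjoint (facetStar (s + k)) ∧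
        (Fintype.card α).choose s ≤ #A * Fintype.card α ^ (2 * k) := by
  have key := exists_pairwiseDisjoint_card_le_mul
    (Y := powersetCard s (univ : Finset α)) (S := facetStar (s + k))
    (fun x hx => facetStar_nonempty (mem_powersetCard_univ.1 hx) hs)
    (fun x hx => card_filter_facetStar_not_disjoint_le (mem_powersetCard_univ.1 hx) hs)
  rwa [card_powersetCard, card_univ] at key

end Stars

section Skeleton

open Finset

variable {n s k : ℕ} {p : ℝ}

/-- `Δ` has a complete `s`-skeleton, where `s` counts vertices: the dimension is `s - 1`. -/
def HasCompleteSkeleton (s : ℕ) (Δ : Finset (Finset (Fin n))) : Prop :=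
  ∀ x : Finset (Fin n), x.Nonempty → #x ≤ s → x ∈ Δ

lemma rpProb_eq_randomSubsetExp (t : ℕ) (P : Finset (Finset (Fin n)) → Prop) :
    rpProb n t p P =
      randomSubsetExp (powersetCard t univ) p (fun F => if P (genComplex F) then 1 else 0) := by
  have filter_card : ({f : Finset (Fin n) | #f = t} : Finset _) = powersetCard t univ := by
    ext f
    simp only [mem_filter, mem_univ, true_and, mem_powersetCard_univ]
  simp only [rpProb, randomSubsetExp, filter_card, card_powersetCard, card_univ, Fintype.card_fin,
    mul_ite, mul_one, mul_zero]

lemma HasCompleteSkeleton.not_disjoint_facetStar {t : ℕ} {F : Finset (Finset (Fin n))}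
    (hF : HasCompleteSkeleton s (genComplex F)) (hFt : F ⊆ powersetCard t univ)
    {x : Finset (Fin n)} (hx : x.Nonempty) (hxs : #x ≤ s) : ¬ Disjoint F (facetStar t x) := by
  obtain ⟨-, -, f, hfF, hxf⟩ := mem_filter.1 (hF x hx hxs)
  exact not_disjoint_iff.2 ⟨f, hfF, mem_facetStar.2 ⟨mem_powersetCard_univ.1 (hFt hfF), hxf⟩⟩

lemma rpProb_hasCompleteSkeleton_le_prod (hs : 0 < s) (t : ℕ) (hp0 : 0 ≤ p) (hp1 : p ≤ 1)
    {A : Finset (Finset (Fin n))} (hA : A ⊆ powersetCard s univ)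
    (hdisj : (A : Set (Finset (Fin n))).PairwiseDisjoint (facetStar t)) :
    rpProb n t p (HasCompleteSkeleton s) ≤ ∏ x ∈ A, (1 - (1 - p) ^ #(facetStar t x)) := by
  rw [rpProb_eq_randomSubsetExp,
    ← randomSubsetExp_forall_not_disjoint p (fun x _ => facetStar_subset t x) hdisj]
  refine randomSubsetExp_mono hp0 hp1 fun F hF => ?_
  have hit_stars : HasCompleteSkeleton s (genComplex F) → ∀ x ∈ A, ¬ Disjoint F (facetStar t x) :=
    fun hskel x hx => by
      have hxs := mem_powersetCard_univ.1 (hA hx)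
      exact hskel.not_disjoint_facetStar hF (card_pos.1 (hxs ▸ hs)) hxs.le
  split_ifs with hskel hhit
  exacts [le_rfl, absurd (hit_stars hskel) hhit, zero_le_one, le_rfl]

theorem rpProb_hasCompleteSkeleton_le_exp (hs : 0 < s) (hsk : s + k ≤ n) (hp0 : 0 ≤ p)
    (hp1 : p ≤ 1) :
    rpProb n (s + k) p (HasCompleteSkeleton s) ≤
      Real.exp (-(n.choose s / n ^ (2 * k) * (1 - p) ^ (n - s).choose k)) := by
  obtain ⟨A, hA, hdisj, hcard⟩ :=
    exists_pairwiseDisjoint_facetStar (α := Fin n) (hsk.trans_eq (Fintype.card_fin n).symm)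
  rw [Fintype.card_fin] at hcard
  set u : ℝ := (1 - p) ^ (n - s).choose k
  have : 0 ≤ u := pow_nonneg (sub_nonneg.2 hp1) _
  have hu1 : u ≤ 1 := pow_le_one₀ (sub_nonneg.2 hp1) (sub_le_self 1 hp0)
  have star_factor : ∀ x ∈ A, 1 - (1 - p) ^ #(facetStar (s + k) x) = 1 - u := fun x hx => by
    rw [card_facetStar (mem_powersetCard_univ.1 (hA hx)), Fintype.card_fin]
  have card_ge : (n.choose s : ℝ) / n ^ (2 * k) ≤ #A := by
    have : (0 : ℝ) < n := by exact_mod_cast (by lia : 0 < n)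
    rw [div_le_iff₀ (by positivity)]
    exact_mod_cast hcard
  calc rpProb n (s + k) p (HasCompleteSkeleton s)
      ≤ ∏ x ∈ A, (1 - (1 - p) ^ #(facetStar (s + k) x)) :=
        rpProb_hasCompleteSkeleton_le_prod hs (s + k) hp0 hp1 hA hdisj
    _ = (1 - u) ^ #A := prod_eq_pow_card star_factor
    _ ≤ Real.exp (-u) ^ #A := pow_le_pow_left₀ (sub_nonneg.2 hu1) (Real.one_sub_le_exp_neg u) _
    _ = Real.exp (-(#A * u)) := by rw [← Real.exp_nat_mul, mul_neg]
    _ ≤ Real.exp (-(n.choose s / n ^ (2 * k) * u)) := by gcongr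

end Skeleton

section Binomial

open Real
open scoped Nat

lemma entropy_eq_binEntropy (c : ℝ) : entropy c = binEntropy c := by
  simp only [entropy, binEntropy, log_inv]
  ring

lemma entropy_pos {c : ℝ} (hc0 : 0 < c) (hc1 : c < 1) : 0 < entropy c :=
  entropy_eq_binEntropy c ▸ binEntropy_pos hc0 hc1

lemma entropy_div_mul {x y : ℝ} (hx : 0 < x) (hxy : x < y) :
    entropy (x / y) * y = y * log y - x * log x - (y - x) * log (y - x) := by
  have hy : 0 < y := hx.trans hxy
  have hsub : 1 - x / y = (y - x) / y := by rw [sub_div, div_self hy.ne']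
  rw [entropy, hsub, log_div hx.ne' hy.ne', log_div (sub_pos.2 hxy).ne' hy.ne']
  field_simp
  ring

lemma log_factorial_le {m : ℕ} (hm : m ≠ 0) :
    log (m ! : ℝ) ≤ m * log m - m + 1 + log m / 2 := by
  obtain ⟨j, rfl⟩ := Nat.exists_eq_succ_of_ne_zero hm
  have hj : (0 : ℝ) < (j + 1 : ℕ) := by positivity
  have stirling := Stirling.log_stirlingSeq'_antitone (Nat.zero_le j)
  simp only [Function.comp, Nat.succ_eq_add_one, zero_add, Stirling.log_stirlingSeq_formula,
    Nat.factorial_one, Nat.cast_one, log_one, mul_one, one_mul, one_div,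
    log_mul two_ne_zero hj.ne', log_div hj.ne' (exp_pos 1).ne',
    log_inv, log_exp] at stirling
  linarith

lemma log_factorial_eq_log_choose_add {n t : ℕ} (ht : t ≤ n) :
    log (n ! : ℝ) = log (n.choose t : ℝ) + log (t ! : ℝ) + log ((n - t)! : ℝ) := by
  have := Nat.choose_pos ht
  rw [← Nat.choose_mul_factorial_mul_factorial ht]
  push_cast
  rw [log_mul (by positivity) (by positivity), log_mul (by positivity) (by positivity)]

lemma entropy_mul_sub_le_log_choose {n t : ℕ} (ht0 : 0 < t) (htn : t < n) :
    entropy (t / n) * n - 2 - log n ≤ log (n.choose t : ℝ) := by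
  have ht : (0 : ℝ) < t := by exact_mod_cast ht0
  have htn' : (t : ℝ) < n := by exact_mod_cast htn
  have lower_n := Stirling.le_log_factorial_stirling (n := n) (by lia)
  have upper_t := log_factorial_le ht0.ne'
  have upper_sub := log_factorial_le (m := n - t) (by lia)
  rw [Nat.cast_sub htn.le] at upper_sub
  have log_t_le : log (t : ℝ) ≤ log n := log_le_log ht htn'.le
  have log_sub_le : log ((n : ℝ) - t) ≤ log n := log_le_log (by linarith) (by linarith)
  have log_n_nonneg : 0 ≤ log (n : ℝ) := log_natCast_nonneg n
  have log_two_pi_pos : 0 < log (2 * π) := log_pos (by linarith [pi_gt_three])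
  rw [entropy_div_mul ht htn']
  linarith [log_factorial_eq_log_choose_add htn.le]

lemma choose_add_le_pow_mul_choose (n s k : ℕ) : n.choose (s + k) ≤ n ^ k * n.choose s := by
  calc n.choose (s + k)
      ≤ n.choose (s + k) * (s + k).choose s :=
        Nat.le_mul_of_pos_right _ (Nat.choose_pos (Nat.le_add_right s k))
    _ = n.choose s * (n - s).choose k := by
        rw [Nat.choose_mul (Nat.le_add_right s k), Nat.add_sub_cancel_left]
    _ ≤ n.choose s * n ^ k := by
        gcongr
        exact (Nat.choose_le_pow _ _).trans (Nat.pow_le_pow_left (Nat.sub_le n s) k)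
    _ = n ^ k * n.choose s := mul_comm _ _

lemma exp_entropy_mul_le_pow_mul_choose {n s k : ℕ} (h0 : 0 < s + k) (hn : s + k < n) :
    exp (entropy ((s + k : ℕ) / n) * n - 2 - log n) ≤ n ^ k * n.choose s := by
  have choose_pos : (0 : ℝ) < n.choose (s + k) := by exact_mod_cast Nat.choose_pos hn.le
  calc exp (entropy ((s + k : ℕ) / n) * n - 2 - log n)
      ≤ n.choose (s + k) := (le_log_iff_exp_le choose_pos).1
        (entropy_mul_sub_le_log_choose h0 hn)
    _ ≤ n ^ k * n.choose s := by exact_mod_cast choose_add_le_pow_mul_choose n s k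

lemma add_natCast_pow_le {m : ℝ} {k : ℕ} (hm : 0 < m) (hkm : (k : ℝ) ^ 2 ≤ m) :
    (m + k) ^ k ≤ m ^ k * (1 + 2 * (k ^ 2 / m)) := by
  have ratio_nonneg : 0 ≤ (k : ℝ) ^ 2 / m := by positivity
  have ratio_le_one : (k : ℝ) ^ 2 / m ≤ 1 := (div_le_one hm).2 hkm
  have exp_le : exp ((k : ℝ) ^ 2 / m) ≤ 1 + 2 * (k ^ 2 / m) := by
    have := abs_exp_sub_one_le (x := (k : ℝ) ^ 2 / m) (by rwa [abs_of_nonneg ratio_nonneg])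
    rw [abs_of_nonneg ratio_nonneg] at this
    linarith [le_abs_self (exp ((k : ℝ) ^ 2 / m) - 1)]
  calc (m + k) ^ k = m ^ k * (k / m + 1) ^ k := by rw [← mul_pow]; field_simp; ring
    _ ≤ m ^ k * exp (k / m) ^ k := by gcongr; exact add_one_le_exp _
    _ = m ^ k * exp (k ^ 2 / m) := by rw [← exp_nat_mul]; ring_nf
    _ ≤ m ^ k * (1 + 2 * (k ^ 2 / m)) := by gcongr

lemma mul_choose_le {m G : ℝ} {N k : ℕ} (hN : (N : ℝ) = m + k) (hm : 0 < m)
    (hkm : (k : ℝ) ^ 2 ≤ m) (hG : 0 ≤ G) :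
    G * k ! / m ^ k * N.choose k ≤ G * (1 + 2 * (k ^ 2 / m)) := by
  calc G * k ! / m ^ k * N.choose k
      ≤ G * k ! / m ^ k * ((m + k) ^ k / k !) := by
        gcongr
        exact hN ▸ Nat.choose_le_pow_div k N
    _ ≤ G * k ! / m ^ k * (m ^ k * (1 + 2 * (k ^ 2 / m)) / k !) := by
        gcongr
        exact add_natCast_pow_le hm hkm
    _ = G * (1 + 2 * (k ^ 2 / m)) := by field_simp

lemma exp_neg_le_one_sub {p : ℝ} (hp : p ≤ 1 / 2) :
    exp (-(p + 2 * p ^ 2)) ≤ 1 - p := by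
  have one_sub_pos : 0 < 1 - p := by linarith
  have inv_le : (1 - p)⁻¹ ≤ 1 + p + 2 * p ^ 2 := by
    rw [inv_le_iff_one_le_mul₀ one_sub_pos]
    nlinarith [mul_nonneg (sq_nonneg p) (by linarith : 0 ≤ 1 - 2 * p)]
  rw [← le_log_iff_exp_le one_sub_pos]
  linarith [one_sub_inv_le_log_of_pos one_sub_pos]

lemma exp_neg_le_one_sub_pow {p : ℝ} (hp : p ≤ 1 / 2) (M : ℕ) :
    exp (-(p * M + 2 * p * (p * M))) ≤ (1 - p) ^ M := by
  calc exp (-(p * M + 2 * p * (p * M))) = exp (-(p + 2 * p ^ 2)) ^ M := by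
        rw [← exp_nat_mul]
        ring_nf
    _ ≤ (1 - p) ^ M := by
        gcongr
        exact exp_neg_le_one_sub hp

end Binomial

section Threshold

open Real Filter
open scoped Nat

variable {c q : ℝ} {k : ℕ}

/-- The facet probability `p_n` at which complete skeletons are ruled out: `C / n ^ (k - 1)` with
`C = α(c) k! / (1 - c) ^ k`, lowered by a correction of relative order `q log n / n`. -/
def facetProb (c q : ℝ) (k n : ℕ) : ℝ :=
  1 / (n : ℝ) ^ (k - 1) *
    (entropy c * k ! / (1 - c) ^ k - q * k ! / (1 - c) ^ k * log n / n)

-- In this form `α(c) n - q log n` is the leading term of `p * (n - t + k).choose k`.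
lemma facetProb_eq (hc1 : c < 1) (hk : k ≠ 0) {n : ℕ} (hn : n ≠ 0) :
    facetProb c q k n = (entropy c * n - q * log n) * k ! / ((1 - c) * n) ^ k := by
  have hc : 1 - c ≠ 0 := (sub_pos.2 hc1).ne'
  have hn' : (n : ℝ) ≠ 0 := Nat.cast_ne_zero.2 hn
  rw [facetProb, mul_pow, ← pow_sub_one_mul hk (n : ℝ)]
  field_simp

lemma facetProb_le (hc0 : 0 < c) (hc1 : c < 1) (hk : 2 ≤ k) (hq : 0 ≤ q) (n : ℕ) :
    facetProb c q k n ≤ entropy c * k ! / (1 - c) ^ k / n := by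
  obtain rfl | hn := eq_or_ne n 0
  · simp [facetProb, show k - 1 ≠ 0 by lia]
  have hn1 : (1 : ℝ) ≤ n := by exact_mod_cast Nat.one_le_iff_ne_zero.2 hn
  have hα := entropy_pos hc0 hc1
  have : 0 < 1 - c := sub_pos.2 hc1
  have : 0 ≤ log (n : ℝ) := log_natCast_nonneg n
  have correction_nonneg : 0 ≤ q * k ! / (1 - c) ^ k * log n / n := by positivity
  calc facetProb c q k n
      ≤ 1 / (n : ℝ) ^ (k - 1) * (entropy c * k ! / (1 - c) ^ k) := by
        rw [facetProb]
        gcongr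
        linarith
    _ ≤ 1 / n * (entropy c * k ! / (1 - c) ^ k) := by
        gcongr
        exact le_self_pow₀ hn1 (by lia)
    _ = entropy c * k ! / (1 - c) ^ k / n := by ring

lemma eventually_mul_log_le (q : ℝ) {b : ℝ} (hb : 0 < b) :
    ∀ᶠ n : ℕ in atTop, q * log n ≤ b * n := by
  have hlittle := (isLittleO_log_id_atTop.const_mul_left q).bound hb
  filter_upwards [tendsto_natCast_atTop_atTop.eventually hlittle] with n hn
  simpa using (le_abs_self _).trans hn

lemma eventually_facetProb_nonneg (hc0 : 0 < c) (hc1 : c < 1) (hk : k ≠ 0) (q : ℝ) :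
    ∀ᶠ n : ℕ in atTop, 0 ≤ facetProb c q k n := by
  filter_upwards [eventually_mul_log_le q (entropy_pos hc0 hc1), eventually_ne_atTop 0]
    with n hlog hn
  have : 0 < 1 - c := sub_pos.2 hc1
  have : 0 ≤ entropy c * n - q * log n := sub_nonneg.2 hlog
  rw [facetProb_eq hc1 hk hn]
  positivity

lemma eventually_facetProb_le_half (hc0 : 0 < c) (hc1 : c < 1) (hk : 2 ≤ k) (hq : 0 ≤ q) :
    ∀ᶠ n : ℕ in atTop, facetProb c q k n ≤ 1 / 2 := by
  have hlim := tendsto_const_div_atTop_nhds_zero_nat (entropy c * k ! / (1 - c) ^ k)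
  filter_upwards [hlim.eventually_le_const one_half_pos] with n hn
  exact (facetProb_le hc0 hc1 hk hq n).trans hn

lemma facetProb_mul_choose_le (hc1 : c < 1) (hk : k ≠ 0) (hq : 0 ≤ q) {n N : ℕ}
    (hn : n ≠ 0) (hN : (N : ℝ) = (1 - c) * n + k) (hkn : (k : ℝ) ^ 2 ≤ (1 - c) * n)
    (hlog : q * log n ≤ entropy c * n) :
    facetProb c q k n * N.choose k ≤
      entropy c * n - q * log n + 2 * k ^ 2 * entropy c / (1 - c) := by
  have hc := sub_pos.2 hc1
  have : (0 : ℝ) < n := by exact_mod_cast Nat.pos_of_ne_zero hn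
  have : 0 ≤ log (n : ℝ) := log_natCast_nonneg n
  calc facetProb c q k n * N.choose k
      ≤ (entropy c * n - q * log n) * (1 + 2 * (k ^ 2 / ((1 - c) * n))) := by
        rw [facetProb_eq hc1 hk hn]
        exact mul_choose_le hN (by positivity) hkn (sub_nonneg.2 hlog)
    _ = entropy c * n - q * log n
          + (entropy c * n - q * log n) * (2 * (k ^ 2 / ((1 - c) * n))) := by ring
    _ ≤ entropy c * n - q * log n + entropy c * n * (2 * (k ^ 2 / ((1 - c) * n))) := by
        gcongr
        exact sub_le_self _ (by positivity)
    _ = entropy c * n - q * log n + 2 * k ^ 2 * entropy c / (1 - c) := by field_simp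

lemma exists_eventually_exp_le_one_sub_facetProb_pow (hc0 : 0 < c) (hc1 : c < 1) (hk : 2 ≤ k)
    (hq : 0 ≤ q) :
    ∃ K : ℝ, ∀ᶠ n : ℕ in atTop, ∀ N : ℕ, (N : ℝ) = (1 - c) * n + k →
      exp (-(entropy c * n - q * log n + K)) ≤ (1 - facetProb c q k n) ^ N.choose k := by
  have hk0 : k ≠ 0 := by lia
  have hα := entropy_pos hc0 hc1
  have hc := sub_pos.2 hc1
  have linear_tendsto : Tendsto (fun n : ℕ => (1 - c) * (n : ℝ)) atTop atTop :=
    tendsto_natCast_atTop_atTop.const_mul_atTop hc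
  set C := entropy c * k ! / (1 - c) ^ k
  set K₁ := 2 * k ^ 2 * entropy c / (1 - c)
  refine ⟨K₁ + 2 * C * (entropy c + K₁), ?_⟩
  filter_upwards [eventually_facetProb_nonneg hc0 hc1 hk0 q,
    eventually_facetProb_le_half hc0 hc1 hk hq, eventually_mul_log_le q hα,
    linear_tendsto.eventually_ge_atTop ((k : ℝ) ^ 2), eventually_ge_atTop 1]
    with n hp0 hp_half hlog hkn hn N hN
  have hn1 : (1 : ℝ) ≤ n := by exact_mod_cast hn
  have : 0 ≤ log (n : ℝ) := log_natCast_nonneg n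
  refine le_trans ?_ (exp_neg_le_one_sub_pow hp_half _)
  set p := facetProb c q k n
  have first_order : p * N.choose k ≤ entropy c * n - q * log n + K₁ :=
    facetProb_mul_choose_le hc1 hk0 hq (by lia) hN hkn hlog
  have second_order : 2 * p * (p * N.choose k) ≤ 2 * C * (entropy c + K₁) := by
    have crude : p * N.choose k ≤ (entropy c + K₁) * n := by
      have : 0 ≤ q * log n := by positivity
      have : K₁ ≤ K₁ * n := le_mul_of_one_le_right (by positivity) hn1
      linarith
    calc 2 * p * (p * N.choose k) ≤ 2 * (C / n) * ((entropy c + K₁) * n) := by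
          gcongr
          exact facetProb_le hc0 hc1 hk hq n
      _ = 2 * C * (entropy c + K₁) := by field_simp
  exact exp_le_exp.2 (by linarith)

-- Passing from `n.choose t` to `n.choose s` costs `n ^ k`, the packing costs `n ^ (2 * k)`, and
-- Stirling's formula costs a factor `n`: hence `q = 3 * k + 2` leaves one factor `n`.
lemma exists_eventually_mul_le_choose_div_mul (hc0 : 0 < c) (hc1 : c < 1) (hk : 2 ≤ k) :
    ∃ δ > 0, ∀ᶠ n : ℕ in atTop, ∀ s : ℕ, ((s + k : ℕ) : ℝ) = c * n →
      δ * n ≤ n.choose s / n ^ (2 * k) *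
        (1 - facetProb c (3 * k + 2) k n) ^ (n - s).choose k := by
  obtain ⟨K, hK⟩ := exists_eventually_exp_le_one_sub_facetProb_pow (q := 3 * k + 2) hc0 hc1 hk
    (by positivity)
  refine ⟨exp (-(2 + K)), exp_pos _, ?_⟩
  filter_upwards [hK, eventually_gt_atTop 0] with n hpow hn s hsk
  have hn' : (0 : ℝ) < n := by exact_mod_cast hn
  have hskn : s + k < n := by
    have : ((s + k : ℕ) : ℝ) < n := hsk ▸ mul_lt_of_lt_one_left hn' hc1
    exact_mod_cast this
  have choose_bound := exp_entropy_mul_le_pow_mul_choose (by lia) hskn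
  rw [hsk, mul_div_cancel_right₀ c hn'.ne'] at choose_bound
  have avoid_bound := hpow (n - s) (by push_cast [show s ≤ n by lia] at hsk ⊢; linarith)
  set u := (1 - facetProb c (3 * k + 2) k n) ^ (n - s).choose k
  have pow_eq : (n : ℝ) ^ (3 * k + 1) = exp ((3 * k + 1) * log n) := by
    rw [← rpow_natCast, rpow_def_of_pos hn']
    push_cast
    ring_nf
  have key : exp (-(2 + K)) * n ^ (3 * k + 1) ≤ n ^ k * n.choose s * u := by
    calc exp (-(2 + K)) * (n : ℝ) ^ (3 * k + 1)
        = exp (entropy c * n - 2 - log n) *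
            exp (-(entropy c * n - (3 * k + 2) * log n + K)) := by
          rw [pow_eq, ← exp_add, ← exp_add]
          ring_nf
      _ ≤ n ^ k * n.choose s * u := by gcongr
  rw [div_mul_eq_mul_div, le_div_iff₀ (by positivity)]
  refine le_of_mul_le_mul_left ?_ (pow_pos hn' k)
  calc (n : ℝ) ^ k * (exp (-(2 + K)) * n * n ^ (2 * k))
      = exp (-(2 + K)) * n ^ (3 * k + 1) := by ring
    _ ≤ n ^ k * n.choose s * u := key
    _ = n ^ k * (n.choose s * u) := mul_assoc _ _ _

theorem exists_eventually_rpProb_hasCompleteSkeleton_le (hc0 : 0 < c) (hc1 : c < 1)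
    (hk : 2 ≤ k) :
    ∃ δ > 0, ∀ᶠ n : ℕ in atTop, ∀ t : ℕ, (t : ℝ) = c * n →
      rpProb n t (facetProb c (3 * k + 2) k n) (HasCompleteSkeleton (t - k)) ≤
        exp (-(δ * n)) := by
  have hk0 : k ≠ 0 := by lia
  obtain ⟨δ, hδ, hbound⟩ := exists_eventually_mul_le_choose_div_mul hc0 hc1 hk
  have linear_tendsto : Tendsto (fun n : ℕ => c * (n : ℝ)) atTop atTop :=
    tendsto_natCast_atTop_atTop.const_mul_atTop hc0
  refine ⟨δ, hδ, ?_⟩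
  filter_upwards [hbound, eventually_facetProb_nonneg hc0 hc1 hk0 (3 * k + 2),
    eventually_facetProb_le_half (q := 3 * k + 2) hc0 hc1 hk (by positivity),
    linear_tendsto.eventually_gt_atTop (k : ℝ)] with n hbound hp0 hp_half hkn t ht
  have hkt : k < t := by exact_mod_cast ht ▸ hkn
  have htn : t ≤ n := by
    exact_mod_cast ht ▸ mul_le_of_le_one_left (Nat.cast_nonneg (α := ℝ) n) hc1.le
  obtain ⟨s, rfl⟩ := Nat.exists_eq_add_of_le' hkt.le
  rw [Nat.add_sub_cancel]
  exact (rpProb_hasCompleteSkeleton_le_exp (by lia) htn hp0 (by linarith)).trans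
    (exp_le_exp.2 (neg_le_neg (hbound s ht)))

end Threshold

/-- For constants `0 < c < 1`, `k ≥ 2`, with `C = α(c)·k!/(1-c)^k`, there is a
constant `q > 0` so that for `t = cn`, `t' = t - k` and
`p = n^{-(k-1)}(C - q(1-c)^{-k} k! log n / n)`, the complex `Δ ~ RP(n,t,p)` with
high probability does not have a complete `t'`-skeleton. -/
theorem stmt2 (c : ℝ) (hc0 : 0 < c) (hc1 : c < 1) (k : ℕ) (hk : 2 ≤ k) :
    ∃ q : ℝ, 0 < q ∧
      ∀ ε : ℝ, 0 < ε → ∃ N : ℕ, ∀ n : ℕ, N ≤ n → ∀ t : ℕ, (t : ℝ) = c * n →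
        rpProb n t
          ((1 / (n : ℝ) ^ (k - 1)) *
            (entropy c * k.factorial / (1 - c) ^ k -
              q * (k.factorial : ℝ) / (1 - c) ^ k * Real.log n / n))
          (fun Δ => ∀ x : Finset (Fin n), x.Nonempty → x.card ≤ t - k → x ∈ Δ) ≤ ε := by
  obtain ⟨δ, hδ, hbound⟩ := exists_eventually_rpProb_hasCompleteSkeleton_le hc0 hc1 hk
  refine ⟨3 * k + 2, by positivity, fun ε hε => ?_⟩
  have exp_tendsto_zero : Filter.Tendsto (fun n : ℕ => Real.exp (-(δ * n))) Filter.atTop (nhds 0) :=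
    Real.tendsto_exp_neg_atTop_nhds_zero.comp
      (tendsto_natCast_atTop_atTop.const_mul_atTop hδ)
  obtain ⟨N, hN⟩ := Filter.eventually_atTop.1
    (hbound.and (exp_tendsto_zero.eventually_le_const hε))
  exact ⟨N, fun n hn t ht => ((hN n hn).1 t ht).trans (hN n hn).2⟩
end
end
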